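/- (Biernacki) For every positive integer m there exists a constant A_m > 0 depending only on m such that: if f(z) = Σ_{k≥0} a_k z^k is analytic and m-valent in the disk D_R of radius R centered at 0 ∈ ℂ, then for every k ≥ m+1, |a_k| R^k ≤ (A_m·k/m)^{2m} · max_{1≤i≤m} |a_i| R^i. -/

import Mathlib

-- The order of vanishing of `g` at `z` (zero if `g` is not analytic at `z`).
open scoped Classical in
noncomputable def ordAt (g : ℂ → ℂ) (z : ℂ) : ℕ∞ :=
  if h : AnalyticAt ℂ g z then analyticOrderAt g z else 0

/-- The number of zeroes of `g` in `Ω`, counted with multiplicity. -/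
noncomputable def solCount (g : ℂ → ℂ) (Ω : Set ℂ) : ℕ∞ :=
  ∑' z : Ω, ordAt g z

/-- `f` is `(s,p)`-valent in `Ω`: for every polynomial `P` of degree at most `s`,
the equation `f = P` has at most `p` solutions in `Ω`, counted with multiplicity. -/
def IsSPValentOn (f : ℂ → ℂ) (Ω : Set ℂ) (s p : ℕ) : Prop :=
  ∀ P : Polynomial ℂ, P.degree ≤ (s : ℕ) →
    solCount (fun z => f z - P.eval z) Ω ≤ (p : ℕ∞)

/-- `g` is `p`-valent in `Ω`: for every constant `c`, the equation `g = c` has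
at most `p` solutions in `Ω`, counted with multiplicity. -/
def IsPValentOn (g : ℂ → ℂ) (Ω : Set ℂ) (p : ℕ) : Prop :=
  ∀ c : ℂ, solCount (fun z => g z - c) Ω ≤ (p : ℕ∞)

/-!
The function `u = ½ log (1 + |w|²)` is the potential of spherical area, and `u ∘ F` is
sub-Poisson for analytic `F`. In the coordinate `w = log z`, Stokes' theorem on the rectangle
`[-log 2, 0] × [0, 2π]` compares the Poisson integrals of `u ∘ F` over `|z| = 1` and `|z| = 1/2`.
The difference is at most `∬ ‖K‖ ‖A‖`, where `K` is the Herglotz kernel of a point `z₀` and `A` the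
gradient of `u ∘ F ∘ exp`. By AM–GM it is at most `1/(2m) ∬ ‖A‖² + m/2 ∬ ‖K‖²`, and since `F` is at
most `m`-to-one, `∬ ‖A‖² ≤ 2πmT` with `T = sup u ∘ F`. So `u (F z₀)` is bounded by `T / 2` plus
`m log (1 / (1 - |z₀|²))` and constants, and the factor `1/2` makes the estimate self-improving: if
`|f| ≤ 1` on `|z| ≤ 1/2`, then `|f z| (1 - |z|) ^ (2m) ≤ 2 ^ (1 + 8m)`.

Normalise `f` so that `f 0 = 0` and `max |f| = 1` on `|z| ≤ 1/2`. If `a₁, …, aₘ` were all tiny, `f`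
would omit a small value `δ` near `0`; Jensen's formula and Harnack's inequality for `log |f - δ|`
on `|z| = 3/4` would then force `|f| < 1` on `|z| ≤ 1/2`. So some `|aᵢ|` with `i ≤ m` is bounded
below, while Cauchy's estimate on `|z| = 1 - 1/(2k)` bounds `|aₖ|` above by a multiple of
`k ^ (2m)`.
-/

section

open Real Set Filter Topology MeasureTheory Metric
open scoped ComplexConjugate

section Poisson

variable {c w : ℂ} {R : ℝ}

lemma circleIntegrable_poissonKernel_smul (hw : w ∈ ball c R) {g : ℂ → ℝ}
    (hg : CircleIntegrable g c R) : CircleIntegrable (poissonKernel c w • g) c R := by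
  refine hg.continuousOn_smul ?_
  rw [poissonKernel_eq_re_herglotzRieszKernel]
  exact Complex.continuous_re.comp_continuousOn (continuousOn_herglotzRieszKernel_sphere hw)

lemma div_le_poissonKernel (hw : w ∈ ball c R) {z : ℂ} (hz : z ∈ sphere c R) :
    (R - ‖w - c‖) / (R + ‖w - c‖) ≤ poissonKernel c w z := by
  rw [poissonKernel_eq_re_herglotzRieszKernel]
  exact le_re_herglotzRieszKernel hz hw

lemma poissonKernel_nonneg (hw : w ∈ ball c R) {z : ℂ} (hz : z ∈ sphere c R) :
    0 ≤ poissonKernel c w z := by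
  have hwR : ‖w - c‖ < R := mem_ball_iff_norm.1 hw
  refine le_trans (div_nonneg ?_ ?_) (div_le_poissonKernel hw hz) <;>
    linarith [norm_nonneg (w - c)]

lemma circleAverage_poissonKernel_smul_const (hw : w ∈ ball c R) (L : ℝ) :
    circleAverage (poissonKernel c w • fun _ ↦ L) c R = L :=
  (InnerProductSpace.harmonicOnNhd_const L).circleAverage_poissonKernel_smul hw

lemma circleAverage_poissonKernel_smul_log_norm {g : ℂ → ℂ} (hw : w ∈ ball c R)
    (hg : AnalyticOnNhd ℂ g (closedBall c R)) (hg0 : ∀ z ∈ closedBall c R, g z ≠ 0) :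
    circleAverage (poissonKernel c w • fun z ↦ log ‖g z‖) c R = log ‖g w‖ :=
  InnerProductSpace.HarmonicOnNhd.circleAverage_poissonKernel_smul
    (fun z hz ↦ (hg z hz).harmonicAt_log_norm (hg0 z hz)) hw

lemma sq_norm_sub_conj_mul_sub_sq (u z : ℂ) (R : ℝ) :
    ‖R ^ 2 - conj u * z‖ ^ 2 - (R * ‖z - u‖) ^ 2 = (R ^ 2 - ‖u‖ ^ 2) * (R ^ 2 - ‖z‖ ^ 2) := by
  simp only [mul_pow, ← Complex.normSq_eq_norm_sq, Complex.normSq_apply]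
  simp only [pow_two, Complex.sub_re, Complex.sub_im, Complex.mul_re, Complex.mul_im,
    Complex.conj_re, Complex.conj_im, Complex.ofReal_re, Complex.ofReal_im]
  ring

-- The reflection of the factor `z - u` in the circle.
lemma exists_analyticOnNhd_norm_eq_norm_sub {u : ℂ} (hu : u ∈ ball c R) :
    ∃ G : ℂ → ℂ, AnalyticOnNhd ℂ G (closedBall c R) ∧ (∀ z ∈ closedBall c R, G z ≠ 0) ∧
      (∀ z ∈ sphere c R, ‖G z‖ = ‖z - u‖) ∧ ∀ z ∈ closedBall c R, ‖z - u‖ ≤ ‖G z‖ := by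
  have hR : 0 < R := pos_of_mem_ball hu
  have hRc : (R : ℂ) ≠ 0 := by exact_mod_cast hR.ne'
  have huR : ‖u - c‖ < R := mem_ball_iff_norm.1 hu
  let G : ℂ → ℂ := fun z ↦ (R ^ 2 - conj (u - c) * (z - c)) / R
  have norm_G (z : ℂ) : ‖G z‖ = ‖R ^ 2 - conj (u - c) * (z - c)‖ / R := by
    simp [G, abs_of_pos hR]
  have h_identity (z : ℂ) := sq_norm_sub_conj_mul_sub_sq (u - c) (z - c) R
  simp only [sub_sub_sub_cancel_right] at h_identity
  refine ⟨G, fun z _ ↦ by unfold G; fun_prop (disch := exact hRc), ?_, ?_, ?_⟩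
  · intro z hz hGz
    have hzR : ‖z - c‖ ≤ R := mem_closedBall_iff_norm.1 hz
    have h_eq : (R : ℂ) ^ 2 = conj (u - c) * (z - c) := by
      simpa only [G, div_eq_zero_iff, hRc, or_false, sub_eq_zero] using hGz
    have h_norm : R ^ 2 = ‖u - c‖ * ‖z - c‖ := by
      simpa [-map_sub, Complex.norm_conj] using congrArg norm h_eq
    nlinarith [norm_nonneg (u - c), norm_nonneg (z - c)]
  · intro z hz
    have := h_identity z
    rw [mem_sphere_iff_norm.1 hz, sub_self, mul_zero, sub_eq_zero,
      sq_eq_sq₀ (norm_nonneg _) (by positivity)] at this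
    rw [norm_G, this]
    field_simp
  · intro z hz
    have hzR : ‖z - c‖ ≤ R := mem_closedBall_iff_norm.1 hz
    rw [norm_G, le_div_iff₀ hR, mul_comm]
    refine abs_le_of_sq_le_sq' ?_ (norm_nonneg _) |>.2
    have : 0 ≤ (R ^ 2 - ‖u - c‖ ^ 2) * (R ^ 2 - ‖z - c‖ ^ 2) := by
      apply mul_nonneg <;> nlinarith [norm_nonneg (u - c), norm_nonneg (z - c)]
    linarith [h_identity z]

lemma log_norm_sub_le_circleAverage {u : ℂ} (hw : w ∈ ball c R) (hu : u ∈ closedBall c R)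
    (hwu : w ≠ u) :
    log ‖w - u‖ ≤ circleAverage (poissonKernel c w • fun z ↦ log ‖z - u‖) c R := by
  rcases (mem_closedBall_iff_norm.1 hu).eq_or_lt with hu_sphere | hu_ball
  · have := circleAverage_re_herglotzRieszKernel_mul_log (mem_sphere_iff_norm.2 hu_sphere) hw
    rw [← poissonKernel_eq_re_herglotzRieszKernel] at this
    exact this.ge
  obtain ⟨G, hG, hG0, hG_sphere, hG_le⟩ :=
    exists_analyticOnNhd_norm_eq_norm_sub (mem_ball_iff_norm.2 hu_ball)
  calc log ‖w - u‖ ≤ log ‖G w‖ :=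
        log_le_log (norm_pos_iff.2 (sub_ne_zero.2 hwu)) (hG_le w (ball_subset_closedBall hw))
    _ = circleAverage (poissonKernel c w • fun z ↦ log ‖G z‖) c R :=
        (circleAverage_poissonKernel_smul_log_norm hw hG hG0).symm
    _ = circleAverage (poissonKernel c w • fun z ↦ log ‖z - u‖) c R := by
        refine circleAverage_congr_sphere fun z hz ↦ ?_
        rw [abs_of_pos (pos_of_mem_ball hw)] at hz
        simp [hG_sphere z hz]

lemma exists_log_norm_eq_sum_log_norm_sub {f : ℂ → ℂ} (hw : w ∈ ball c R)
    (hf : AnalyticOnNhd ℂ f (closedBall c R)) (hfw : f w ≠ 0) :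
    ∃ (s : Finset ℂ) (n : ℂ → ℝ) (g : ℂ → ℂ),
      (∀ u ∈ s, u ∈ closedBall c R ∧ u ≠ w ∧ 0 ≤ n u) ∧
      AnalyticOnNhd ℂ g (closedBall c R) ∧ (∀ z ∈ closedBall c R, g z ≠ 0) ∧
      log ‖f w‖ = ∑ u ∈ s, n u * log ‖w - u‖ + log ‖g w‖ ∧
      (fun z ↦ log ‖f z‖) =ᶠ[codiscreteWithin (closedBall c R)]
        fun z ↦ ∑ u ∈ s, n u * log ‖z - u‖ + log ‖g z‖ := by
  have hR : 0 < R := pos_of_mem_ball hw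
  have hwc : w ∈ closedBall c R := ball_subset_closedBall hw
  have hmero := hf.meromorphicOn
  have order_w : meromorphicOrderAt f w = 0 :=
    (hf w hwc).meromorphicNFAt.meromorphicOrderAt_eq_zero_iff.2 hfw
  have order_ne_top : ∀ u : closedBall c R, meromorphicOrderAt f u ≠ ⊤ := by
    rw [← hmero.exists_meromorphicOrderAt_ne_top_iff_forall
      ⟨nonempty_closedBall.mpr hR.le, (convex_closedBall _ _).isPreconnected⟩]
    exact ⟨⟨w, hwc⟩, by simp [order_w]⟩
  set D := MeromorphicOn.divisor f (closedBall c R) with hD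
  have D_finite := D.finiteSupport (isCompact_closedBall c R)
  obtain ⟨g, hg, hg0, hfg⟩ := hmero.extract_zeros_poles order_ne_top D_finite
  have acc_w : AccPt w (𝓟 (closedBall c R)) := by
    refine accPt_iff_frequently_nhdsNE.mpr (compl_notMem (mem_nhdsWithin.mpr ?_))
    exact ⟨ball c R, isOpen_ball, hw, fun _ h ↦ ball_subset_closedBall h.1⟩
  have finsum_eq (z : ℂ) :
      ∑ᶠ u, (D u : ℝ) * log ‖z - u‖ = ∑ u ∈ D_finite.toFinset, (D u : ℝ) * log ‖z - u‖ :=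
    finsum_eq_sum_of_support_subset _ fun u hu ↦ by
      simpa using fun h ↦ hu (by simp [h])
  refine ⟨D_finite.toFinset, fun u ↦ D u, g, fun u hu ↦ ?_, hg, fun z hz ↦ hg0 ⟨z, hz⟩, ?_, ?_⟩
  · have hDu : D u ≠ 0 := by simpa using hu
    have huc : u ∈ closedBall c R := not_imp_comm.1 D.apply_eq_zero_of_notMem hDu
    refine ⟨huc, ?_, Int.cast_nonneg (MeromorphicOn.AnalyticOnNhd.divisor_nonneg hf u)⟩
    rintro rfl
    exact hDu (by rw [hD, MeromorphicOn.divisor_apply hmero huc, order_w, WithTop.untop₀_zero])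
  · rw [← finsum_eq, ← (hf w hwc).meromorphicTrailingCoeffAt_of_ne_zero hfw]
    exact MeromorphicOn.log_norm_meromorphicTrailingCoeffAt_extract_zeros_poles D_finite hwc acc_w
      (hmero w hwc) (hg w hwc) (hg0 ⟨w, hwc⟩) hfg
  · filter_upwards [MeromorphicOn.extract_zeros_poles_log hg0 hfg] with z hz
    have hsupp : (Function.support fun u (z : ℂ) ↦ (D u : ℝ) * log ‖z - u‖).Finite :=
      D_finite.subset fun u hu hDu ↦ hu (by ext; simp [hDu])
    rw [hz, ← finsum_eq, Pi.add_apply, finsum_apply hsupp]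

lemma circleIntegrable_log_norm_sub (u : ℂ) : CircleIntegrable (fun z ↦ log ‖z - u‖) c R :=
  MeromorphicOn.circleIntegrable_log_norm (f := fun z ↦ z - u) fun z _ ↦ by fun_prop

lemma circleIntegrable_log_norm {g : ℂ → ℂ} (hR : 0 ≤ R)
    (hg : AnalyticOnNhd ℂ g (closedBall c R)) : CircleIntegrable (fun z ↦ log ‖g z‖) c R := by
  refine MeromorphicOn.circleIntegrable_log_norm ?_
  rw [abs_of_nonneg hR]
  exact (hg.mono sphere_subset_closedBall).meromorphicOn

lemma circleAverage_poissonKernel_smul_sum_add (hw : w ∈ ball c R) (s : Finset ℂ) (n : ℂ → ℝ)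
    {F : ℂ → ℂ → ℝ} {G : ℂ → ℝ} (hF : ∀ u, CircleIntegrable (F u) c R)
    (hG : CircleIntegrable G c R) :
    circleAverage (poissonKernel c w • fun z ↦ ∑ u ∈ s, n u * F u z + G z) c R =
      ∑ u ∈ s, n u * circleAverage (poissonKernel c w • F u) c R +
        circleAverage (poissonKernel c w • G) c R := by
  have h_expand : (poissonKernel c w • fun z ↦ ∑ u ∈ s, n u * F u z + G z) =
      (∑ u ∈ s, n u • (poissonKernel c w • F u)) + poissonKernel c w • G := by
    ext z
    simp [mul_add, Finset.mul_sum, mul_left_comm]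
  have hPF (u : ℂ) : CircleIntegrable (n u • (poissonKernel c w • F u)) c R :=
    (circleIntegrable_poissonKernel_smul hw (hF u)).const_smul
  rw [h_expand, circleAverage_add (CircleIntegrable.sum s fun u _ ↦ hPF u)
    (circleIntegrable_poissonKernel_smul hw hG), circleAverage_sum fun u _ ↦ hPF u]
  simp only [circleAverage_smul, smul_eq_mul]

theorem log_norm_le_circleAverage_poissonKernel_smul {f : ℂ → ℂ} (hw : w ∈ ball c R)
    (hf : AnalyticOnNhd ℂ f (closedBall c R)) (hfw : f w ≠ 0) :
    log ‖f w‖ ≤ circleAverage (poissonKernel c w • fun z ↦ log ‖f z‖) c R := by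
  have hR : 0 < R := pos_of_mem_ball hw
  obtain ⟨s, n, g, hs, hg, hg0, hfw_eq, hf_eq⟩ := exists_log_norm_eq_sum_log_norm_sub hw hf hfw
  calc log ‖f w‖ = ∑ u ∈ s, n u * log ‖w - u‖ + log ‖g w‖ := hfw_eq
    _ ≤ ∑ u ∈ s, n u * circleAverage (poissonKernel c w • fun z ↦ log ‖z - u‖) c R +
          circleAverage (poissonKernel c w • fun z ↦ log ‖g z‖) c R := by
        rw [circleAverage_poissonKernel_smul_log_norm hw hg hg0]
        gcongr with u hu
        · exact (hs u hu).2.2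
        · exact log_norm_sub_le_circleAverage hw (hs u hu).1 (hs u hu).2.1.symm
    _ = circleAverage
          (poissonKernel c w • fun z ↦ ∑ u ∈ s, n u * log ‖z - u‖ + log ‖g z‖) c R :=
        (circleAverage_poissonKernel_smul_sum_add hw s n (fun u ↦ circleIntegrable_log_norm_sub u)
          (circleIntegrable_log_norm hR.le hg)).symm
    _ = circleAverage (poissonKernel c w • fun z ↦ log ‖f z‖) c R := by
        refine circleAverage_congr_codiscreteWithin ?_ hR.ne'
        rw [abs_of_pos hR]
        filter_upwards [codiscreteWithin_mono sphere_subset_closedBall hf_eq] with z hz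
        simp only [Pi.smul_apply', hz]

-- The two-constants (Harnack) form: the Poisson kernel is at least `(R - ‖w - c‖) / (R + ‖w - c‖)`.
theorem log_norm_le_sub_mul_circleAverage {f : ℂ → ℂ} {L : ℝ} (hw : w ∈ ball c R)
    (hf : AnalyticOnNhd ℂ f (closedBall c R)) (hfw : f w ≠ 0)
    (hL : ∀ z ∈ sphere c R, log ‖f z‖ ≤ L) :
    log ‖f w‖ ≤ L - (R - ‖w - c‖) / (R + ‖w - c‖) *
      (L - circleAverage (fun z ↦ log ‖f z‖) c R) := by
  set κ := (R - ‖w - c‖) / (R + ‖w - c‖)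
  have hR : 0 < R := pos_of_mem_ball hw
  have hlog := circleIntegrable_log_norm hR.le hf
  have hconst := circleIntegrable_const L c R
  have hP_const := circleIntegrable_poissonKernel_smul hw hconst
  have hdiff : CircleIntegrable (κ • ((fun _ ↦ L) - fun z ↦ log ‖f z‖)) c R :=
    (hconst.sub hlog).const_smul
  calc log ‖f w‖ ≤ circleAverage (poissonKernel c w • fun z ↦ log ‖f z‖) c R :=
        log_norm_le_circleAverage_poissonKernel_smul hw hf hfw
    _ ≤ circleAverage ((poissonKernel c w • fun _ ↦ L) -
          κ • ((fun _ ↦ L) - fun z ↦ log ‖f z‖)) c R := by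
        refine circleAverage_mono (circleIntegrable_poissonKernel_smul hw hlog)
          (hP_const.sub hdiff) fun z hz ↦ ?_
        rw [abs_of_pos hR] at hz
        have hκ : κ ≤ poissonKernel c w z := div_le_poissonKernel hw hz
        change poissonKernel c w z * log ‖f z‖ ≤
          poissonKernel c w z * L - κ * (L - log ‖f z‖)
        nlinarith [hL z hz]
    _ = L - κ * (L - circleAverage (fun z ↦ log ‖f z‖) c R) := by
        rw [circleAverage_sub hP_const hdiff, circleAverage_smul, circleAverage_sub hconst hlog,
          circleAverage_poissonKernel_smul_const hw, circleAverage_const, smul_eq_mul]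

end Poisson

section Area

/-- Every fibre of `f` over a point has at most `m` points in `s`. Unlike `IsPValentOn`, this
ignores multiplicities, which is all that change of variables sees. -/
def FiberCardLEOn {α β : Type*} (f : α → β) (s : Set α) (m : ℕ) : Prop :=
  ∀ y, (s ∩ f ⁻¹' {y}).encard ≤ m

lemma FiberCardLEOn.comp {α β γ : Type*} {f : β → γ} {g : α → β} {s : Set α} {t : Set β} {m : ℕ}
    (hf : FiberCardLEOn f t m) (hg : InjOn g s) (hst : MapsTo g s t) :
    FiberCardLEOn (f ∘ g) s m := by
  intro y
  have h_maps : MapsTo g (s ∩ f ∘ g ⁻¹' {y}) (t ∩ f ⁻¹' {y}) := fun x hx ↦ ⟨hst hx.1, hx.2⟩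
  exact (encard_le_encard_of_injOn h_maps (hg.mono inter_subset_left)).trans (hf y)

lemma FiberCardLEOn.tsum_indicator_image_le {α β ι : Type*} {f : α → β} {s : Set α} {m : ℕ}
    (hf : FiberCardLEOn f s m) {D : ι → Set α} (hDs : ∀ i, D i ⊆ s)
    (hD : Pairwise (Function.onFun Disjoint D)) (y : β) :
    ∑' i, (f '' D i).indicator (fun _ ↦ (1 : ENNReal)) y ≤ m := by
  have h_preimage (i : {i | y ∈ f '' D i}) : ∃ x ∈ D i, f x = y := i.2
  choose x hxD hxy using h_preimage
  have hx_inj : Function.Injective x := fun i j hij ↦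
    Subtype.ext <| hD.eq <| not_disjoint_iff.2 ⟨x i, hxD i, hij ▸ hxD j⟩
  have h_card : {i | y ∈ f '' D i}.encard ≤ m := by
    rw [← ENat.card_coe_set_eq]
    refine le_trans ?_ (hf y)
    rw [← ENat.card_coe_set_eq]
    exact ENat.card_le_card_of_injective (f := fun i ↦ ⟨x i, hDs i (hxD i), hxy i⟩)
      fun i j hij ↦ hx_inj (congrArg Subtype.val hij)
  calc ∑' i, (f '' D i).indicator (fun _ ↦ (1 : ENNReal)) y
      = ∑' _ : {i | y ∈ f '' D i}, (1 : ENNReal) := (tsum_subtype _ fun _ ↦ (1 : ENNReal)).symm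
    _ = {i | y ∈ f '' D i}.encard := ENNReal.tsum_set_one _
    _ ≤ m := by exact_mod_cast h_card

lemma exists_measurableSet_partition_injOn {X Y : Type*} [TopologicalSpace X]
    [SecondCountableTopology X] [MeasurableSpace X] [OpensMeasurableSpace X] {g : X → Y}
    {s : Set X} (hs : IsOpen s) (hg : ∀ x ∈ s, ∃ U ∈ 𝓝 x, InjOn g U) :
    ∃ D : ℕ → Set X, (∀ n, MeasurableSet (D n)) ∧ Pairwise (Function.onFun Disjoint D) ∧
      (∀ n, InjOn g (D n)) ∧ ⋃ n, D n = s := by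
  have h_open : ∀ x ∈ s, ∃ U ⊆ s, IsOpen U ∧ x ∈ U ∧ InjOn g U := fun x hx ↦ by
    obtain ⟨U, hU, hUinj⟩ := hg x hx
    exact ⟨interior U ∩ s, inter_subset_right, isOpen_interior.inter hs,
      ⟨mem_interior_iff_mem_nhds.2 hU, hx⟩,
      hUinj.mono (inter_subset_left.trans interior_subset)⟩
  choose! U hUs hUo hxU hUinj using h_open
  obtain ⟨t, hts, ht, hst⟩ := TopologicalSpace.countable_cover_nhdsWithin
    fun x hx ↦ mem_nhdsWithin_of_mem_nhds ((hUo x hx).mem_nhds (hxU x hx))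
  rcases t.eq_empty_or_nonempty with rfl | ht_nonempty
  · exact ⟨fun _ ↦ ∅, by simp, fun _ _ _ ↦ disjoint_bot_left, by simp, by simpa [eq_comm] using hst⟩
  obtain ⟨e, rfl⟩ := ht.exists_eq_range ht_nonempty
  have hes (n : ℕ) : e n ∈ s := hts ⟨n, rfl⟩
  refine ⟨disjointed (U ∘ e), MeasurableSet.disjointed fun n ↦ (hUo _ (hes n)).measurableSet,
    disjoint_disjointed _, fun n ↦ (hUinj _ (hes n)).mono (disjointed_subset _ n), ?_⟩
  rw [iUnion_disjointed]
  exact (iUnion_subset fun n ↦ hUs _ (hes n)).antisymm (by simpa using hst)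

lemma abs_det_restrictScalars_toSpanSingleton (c : ℂ) :
    |((ContinuousLinearMap.toSpanSingleton ℂ c : ℂ →L[ℂ] ℂ).restrictScalars ℝ).det| = ‖c‖ ^ 2 := by
  simp [ContinuousLinearMap.det, LinearMap.det_restrictScalars, Algebra.norm_complex_eq,
    Complex.normSq_eq_norm_sq]

variable {g : ℂ → ℂ}

lemma hasFDerivWithinAt_restrictScalars_deriv {D : Set ℂ} {x : ℂ} (hg : DifferentiableAt ℂ g x) :
    HasFDerivWithinAt g ((ContinuousLinearMap.toSpanSingleton ℂ (deriv g x)).restrictScalars ℝ)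
      D x :=
  (hg.hasDerivAt.hasFDerivAt.restrictScalars ℝ).hasFDerivWithinAt

lemma setLIntegral_image_eq_setLIntegral_deriv_sq_mul {D : Set ℂ} (hD : MeasurableSet D)
    (hg : ∀ x ∈ D, DifferentiableAt ℂ g x) (hinj : InjOn g D) (φ : ℂ → ENNReal) :
    ∫⁻ y in g '' D, φ y = ∫⁻ x in D, ENNReal.ofReal (‖deriv g x‖ ^ 2) * φ (g x) := by
  rw [lintegral_image_eq_lintegral_abs_det_fderiv_mul volume hD
    (fun x hx ↦ hasFDerivWithinAt_restrictScalars_deriv (hg x hx)) hinj]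
  simp only [abs_det_restrictScalars_toSpanSingleton]

lemma exists_mem_nhds_injOn_of_deriv_ne_zero {x : ℂ} (hg : AnalyticAt ℂ g x)
    (hx : deriv g x ≠ 0) : ∃ U ∈ 𝓝 x, InjOn g U :=
  ⟨_, hg.hasStrictDerivAt.eventually_left_inverse hx, LeftInvOn.injOn fun _ hz ↦ hz⟩

theorem FiberCardLEOn.setLIntegral_deriv_sq_mul_comp_le {Q : Set ℂ} {m : ℕ}
    (hm : FiberCardLEOn g Q m) (hQ : IsOpen Q) (hg : DifferentiableOn ℂ g Q) {φ : ℂ → ENNReal}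
    (hφ : Measurable φ) :
    ∫⁻ x in Q, ENNReal.ofReal (‖deriv g x‖ ^ 2) * φ (g x) ≤ m * ∫⁻ y in g '' Q, φ y := by
  set N : Set ℂ := {x | deriv g x ≠ 0} with hN
  have hN_meas : MeasurableSet N := measurable_deriv g (measurableSet_singleton 0).compl
  have hQN : IsOpen (Q ∩ N) :=
    (hg.deriv hQ).continuousOn.isOpen_inter_preimage hQ isOpen_ne
  have hg_diff : ∀ x ∈ Q, DifferentiableAt ℂ g x := fun x hx ↦ hg.differentiableAt (hQ.mem_nhds hx)
  obtain ⟨D, hD, hD_disj, hD_inj, hD_union⟩ := exists_measurableSet_partition_injOn hQN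
    fun x hx ↦ exists_mem_nhds_injOn_of_deriv_ne_zero (hg.analyticOnNhd hQ x hx.1) hx.2
  have hDQ (n : ℕ) : D n ⊆ Q := (subset_iUnion D n).trans (hD_union ▸ inter_subset_left)
  have hgD (n : ℕ) : MeasurableSet (g '' D n) := measurable_image_of_fderivWithin (hD n)
    (fun x hx ↦ hasFDerivWithinAt_restrictScalars_deriv (hg_diff x (hDQ n hx))) (hD_inj n)
  have h_critical : ∫⁻ x in Q \ N, ENNReal.ofReal (‖deriv g x‖ ^ 2) * φ (g x) = 0 :=
    setLIntegral_eq_zero (hQ.measurableSet.diff hN_meas) fun x hx ↦ by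
      simp [show deriv g x = 0 by simpa [hN] using hx.2]
  calc ∫⁻ x in Q, ENNReal.ofReal (‖deriv g x‖ ^ 2) * φ (g x)
      = ∫⁻ x in ⋃ n, D n, ENNReal.ofReal (‖deriv g x‖ ^ 2) * φ (g x) := by
        rw [← lintegral_inter_add_sdiff _ Q hN_meas, h_critical, add_zero, hD_union]
    _ = ∑' n, ∫⁻ y in g '' D n, φ y := by
        rw [lintegral_iUnion hD hD_disj]
        exact tsum_congr fun n ↦ (setLIntegral_image_eq_setLIntegral_deriv_sq_mul (hD n)
          (fun x hx ↦ hg_diff x (hDQ n hx)) (hD_inj n) φ).symm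
    _ = ∑' n, ∫⁻ y in g '' Q, (g '' D n).indicator (fun _ ↦ 1) y * φ y := by
        refine tsum_congr fun n ↦ ?_
        simp only [← indicator_mul_left, one_mul]
        rw [lintegral_indicator (hgD n), Measure.restrict_restrict (hgD n),
          inter_eq_left.2 (image_mono (hDQ n))]
    _ = ∫⁻ y in g '' Q, (∑' n, (g '' D n).indicator (fun _ ↦ 1) y) * φ y := by
        simp only [← ENNReal.tsum_mul_right]
        exact (lintegral_tsum fun n ↦
          ((measurable_const.indicator (hgD n)).mul hφ).aemeasurable).symm
    _ ≤ ∫⁻ y in g '' Q, m * φ y := by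
        gcongr with y
        exact hm.tsum_indicator_image_le hDQ hD_disj y
    _ = m * ∫⁻ y in g '' Q, φ y := lintegral_const_mul _ hφ

end Area

section SphericalArea

lemma lintegral_comp_norm_complex {F : ℝ → ENNReal} (hF : Measurable F) :
    ∫⁻ w : ℂ, F ‖w‖ = ENNReal.ofReal (2 * π) * ∫⁻ s in Ioi 0, ENNReal.ofReal s * F s := by
  have h_polar : ∀ p ∈ polarCoord.target,
      ENNReal.ofReal p.1 • F ‖Complex.polarCoord.symm p‖ = ENNReal.ofReal p.1 * F p.1 * 1 := by
    rintro ⟨s, θ⟩ ⟨hs, -⟩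
    rw [Complex.norm_polarCoord_symm, abs_of_pos hs, smul_eq_mul, mul_one]
  rw [← Complex.lintegral_comp_polarCoord_symm, setLIntegral_congr_fun
    polarCoord.open_target.measurableSet h_polar, polarCoord_target, Measure.volume_eq_prod,
    ← Measure.prod_restrict, lintegral_prod_mul (f := fun s ↦ ENNReal.ofReal s * F s)
      (g := fun _ ↦ 1) (by fun_prop) aemeasurable_const, mul_comm]
  simp [two_mul]

lemma setLIntegral_Ioc_div_one_add_sq {M : ℝ} (hM : 0 ≤ M) :
    ∫⁻ s in Ioc 0 M, ENNReal.ofReal (s / (1 + s ^ 2)) =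
      ENNReal.ofReal (1 / 2 * log (1 + M ^ 2)) := by
  have h_cont : Continuous fun s : ℝ ↦ s / (1 + s ^ 2) :=
    .div (by fun_prop) (by fun_prop) fun s ↦ by positivity
  have h_deriv (s : ℝ) : HasDerivAt (fun s ↦ 1 / 2 * log (1 + s ^ 2)) (s / (1 + s ^ 2)) s := by
    have h_inner : HasDerivAt (fun s : ℝ ↦ 1 + s ^ 2) (2 * s) s := by
      simpa using (hasDerivAt_pow 2 s).const_add 1
    exact ((h_inner.log (by positivity)).const_mul (1 / 2)).congr_deriv (by ring)
  rw [← ofReal_integral_eq_lintegral_ofReal, ← intervalIntegral.integral_of_le hM,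
    intervalIntegral.integral_eq_sub_of_hasDerivAt (fun s _ ↦ h_deriv s)
      (h_cont.intervalIntegrable _ _)]
  · simp
  · exact h_cont.integrableOn_Icc.mono_set Ioc_subset_Icc_self
  · filter_upwards [ae_restrict_mem measurableSet_Ioc] with s hs
    exact div_nonneg hs.1.le (by positivity)

lemma setLIntegral_closedBall_norm_sq_div_le {M : ℝ} (hM : 0 ≤ M) :
    ∫⁻ w in closedBall (0 : ℂ) M, ENNReal.ofReal (‖w‖ ^ 2 / (1 + ‖w‖ ^ 2) ^ 2) ≤
      ENNReal.ofReal (π * log (1 + M ^ 2)) := by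
  set F : ℝ → ENNReal := (Iic M).indicator fun s ↦ ENNReal.ofReal (s ^ 2 / (1 + s ^ 2) ^ 2)
  have hF : Measurable F := .indicator (by fun_prop) measurableSet_Iic
  have h_bound : ∀ s ∈ Ioi (0 : ℝ), ENNReal.ofReal s * F s ≤
      (Iic M).indicator (fun s ↦ ENNReal.ofReal (s / (1 + s ^ 2))) s := by
    intro s hs
    by_cases hsM : s ∈ Iic M
    · simp only [F, indicator_of_mem hsM]
      rw [← ENNReal.ofReal_mul (mem_Ioi.1 hs).le]
      refine ENNReal.ofReal_le_ofReal ?_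
      rw [div_eq_mul_inv s]
      refine mul_le_mul_of_nonneg_left ?_ (mem_Ioi.1 hs).le
      rw [← one_div, div_le_div_iff₀ (by positivity) (by positivity)]
      nlinarith [sq_nonneg s]
    · simp [F, hsM]
  calc ∫⁻ w in closedBall (0 : ℂ) M, ENNReal.ofReal (‖w‖ ^ 2 / (1 + ‖w‖ ^ 2) ^ 2)
      = ∫⁻ w : ℂ, F ‖w‖ := by
        rw [← lintegral_indicator measurableSet_closedBall]
        congr with w
        by_cases hw : ‖w‖ ≤ M <;> simp [F, indicator, hw]
    _ = ENNReal.ofReal (2 * π) * ∫⁻ s in Ioi 0, ENNReal.ofReal s * F s :=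
        lintegral_comp_norm_complex hF
    _ ≤ ENNReal.ofReal (2 * π) * ∫⁻ s in Ioc 0 M, ENNReal.ofReal (s / (1 + s ^ 2)) := by
        rw [← Ioi_inter_Iic, inter_comm, ← setLIntegral_indicator measurableSet_Iic]
        gcongr 1
        exact setLIntegral_mono' measurableSet_Ioi h_bound
    _ = ENNReal.ofReal (π * log (1 + M ^ 2)) := by
        rw [setLIntegral_Ioc_div_one_add_sq hM, ← ENNReal.ofReal_mul (by positivity)]
        congr 1
        ring

end SphericalArea

section SphericalPotential

/-- The potential `½ log (1 + |w|²)` of the spherical area form. -/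
noncomputable def sphericalPotential (w : ℂ) : ℝ := 1 / 2 * log (1 + ‖w‖ ^ 2)

lemma sphericalPotential_nonneg (w : ℂ) : 0 ≤ sphericalPotential w :=
  mul_nonneg (by norm_num) (log_nonneg (by nlinarith [sq_nonneg ‖w‖]))

@[fun_prop]
lemma continuous_sphericalPotential : Continuous sphericalPotential :=
  continuous_const.mul (.log (by fun_prop) fun w ↦ by positivity)

lemma log_norm_one_add_conj_mul_le (a b : ℂ) :
    log ‖1 + conj a * b‖ ≤ sphericalPotential a + sphericalPotential b := by
  rcases eq_or_ne (1 + conj a * b) 0 with h_zero | h_ne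
  · simpa [h_zero] using add_nonneg (sphericalPotential_nonneg a) (sphericalPotential_nonneg b)
  have h_pos : 0 < ‖1 + conj a * b‖ := norm_pos_iff.2 h_ne
  have h_triangle : ‖1 + conj a * b‖ ≤ 1 + ‖a‖ * ‖b‖ := (norm_add_le _ _).trans (by simp)
  have h_cauchy_schwarz : ‖1 + conj a * b‖ ^ 2 ≤ (1 + ‖a‖ ^ 2) * (1 + ‖b‖ ^ 2) := by
    nlinarith [sq_nonneg (‖a‖ - ‖b‖), mul_nonneg (norm_nonneg a) (norm_nonneg b)]
  have h_log := log_le_log (by positivity) h_cauchy_schwarz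
  rw [log_pow, log_mul (by positivity) (by positivity), Nat.cast_ofNat] at h_log
  unfold sphericalPotential
  linarith

lemma log_norm_one_add_conj_mul_self (a : ℂ) :
    log ‖1 + conj a * a‖ = 2 * sphericalPotential a := by
  have h_real : 1 + conj a * a = ((1 + ‖a‖ ^ 2 : ℝ) : ℂ) := by
    rw [Complex.conj_mul']
    push_cast
    rfl
  rw [h_real, Complex.norm_of_nonneg (by positivity), sphericalPotential]
  ring

-- `F` is compared with its value at `w` through the analytic function `1 + conj (F w) * F`.
theorem sphericalPotential_le_circleAverage {F : ℂ → ℂ} {c w : ℂ} {R : ℝ} (hw : w ∈ ball c R)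
    (hF : AnalyticOnNhd ℂ F (closedBall c R)) :
    sphericalPotential (F w) ≤
      circleAverage (poissonKernel c w • (sphericalPotential ∘ F)) c R := by
  have hR : 0 < R := pos_of_mem_ball hw
  set b := F w
  set u := sphericalPotential
  have hh : AnalyticOnNhd ℂ (fun z ↦ 1 + conj b * F z) (closedBall c R) :=
    analyticOnNhd_const.add (analyticOnNhd_const.mul hF)
  have hhw : 1 + conj b * F w ≠ 0 := by
    change 1 + conj b * b ≠ 0
    rw [Complex.conj_mul']
    exact_mod_cast (by positivity : (1 + ‖b‖ ^ 2 : ℝ) ≠ 0)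
  have h_int : CircleIntegrable (u ∘ F) c R :=
    (continuous_sphericalPotential.comp_continuousOn
      (hF.continuousOn.mono sphere_subset_closedBall)).circleIntegrable hR.le
  have h_const := circleIntegrable_const (u b) c R
  have h_le : 2 * u b ≤ u b + circleAverage (poissonKernel c w • (u ∘ F)) c R :=
    calc 2 * u b = log ‖1 + conj b * F w‖ := (log_norm_one_add_conj_mul_self b).symm
      _ ≤ circleAverage (poissonKernel c w • fun z ↦ log ‖1 + conj b * F z‖) c R :=
          log_norm_le_circleAverage_poissonKernel_smul hw hh hhw
      _ ≤ circleAverage (poissonKernel c w • ((fun _ ↦ u b) + u ∘ F)) c R := by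
          refine circleAverage_mono
            (circleIntegrable_poissonKernel_smul hw (circleIntegrable_log_norm hR.le hh))
            (circleIntegrable_poissonKernel_smul hw (h_const.add h_int)) fun z hz ↦ ?_
          rw [abs_of_pos hR] at hz
          exact mul_le_mul_of_nonneg_left (log_norm_one_add_conj_mul_le b (F z))
            (poissonKernel_nonneg hw hz)
      _ = u b + circleAverage (poissonKernel c w • (u ∘ F)) c R := by
          rw [smul_add, circleAverage_add (circleIntegrable_poissonKernel_smul hw h_const)
            (circleIntegrable_poissonKernel_smul hw h_int),
            circleAverage_poissonKernel_smul_const hw]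
  linarith

end SphericalPotential

section RectangleStokes

variable {a₁ a₂ b₁ b₂ : ℝ}

lemma Ioo_reProdIm_Ioo_subset : Ioo a₁ a₂ ×ℂ Ioo b₁ b₂ ⊆ Icc a₁ a₂ ×ℂ Icc b₁ b₂ :=
  fun _ hw ↦ ⟨Ioo_subset_Icc_self hw.1, Ioo_subset_Icc_self hw.2⟩

section SetIntegral

variable {E : Type*} [NormedAddCommGroup E] {φ : ℂ → E}

lemma integrableOn_Ioo_reProdIm_Ioo (hφ : ContinuousOn φ (Icc a₁ a₂ ×ℂ Icc b₁ b₂)) :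
    IntegrableOn φ (Ioo a₁ a₂ ×ℂ Ioo b₁ b₂) :=
  (hφ.integrableOn_compact (isCompact_Icc.reProdIm isCompact_Icc)).mono_set Ioo_reProdIm_Ioo_subset

lemma intervalIntegrable_comp_add_mul_I (hb : b₁ ≤ b₂)
    (hφ : ContinuousOn φ (Icc a₁ a₂ ×ℂ Icc b₁ b₂)) {x : ℝ} (hx : x ∈ Icc a₁ a₂) :
    IntervalIntegrable (fun y : ℝ ↦ φ (x + y * Complex.I)) volume b₁ b₂ := by
  refine ContinuousOn.intervalIntegrable_of_Icc hb (hφ.comp (by fun_prop) fun y hy ↦ ?_)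
  exact ⟨by simpa using hx, by simpa using hy⟩

lemma integral_integral_eq_setIntegral_reProdIm [NormedSpace ℝ E] (ha : a₁ ≤ a₂) (hb : b₁ ≤ b₂)
    (hφ : ContinuousOn φ (Icc a₁ a₂ ×ℂ Icc b₁ b₂)) :
    ∫ x in a₁..a₂, ∫ y in b₁..b₂, φ (x + y * Complex.I) =
      ∫ w in Ioo a₁ a₂ ×ℂ Ioo b₁ b₂, φ w := by
  have h_preimage : Complex.measurableEquivRealProd.symm ⁻¹' (Ioo a₁ a₂ ×ℂ Ioo b₁ b₂) =
      Ioo a₁ a₂ ×ˢ Ioo b₁ b₂ := by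
    ext p
    simp [Complex.mem_reProdIm]
  have h_integrable : IntegrableOn (fun p ↦ φ (Complex.measurableEquivRealProd.symm p))
      (Ioo a₁ a₂ ×ˢ Ioo b₁ b₂) := by
    rw [← h_preimage]
    exact (Complex.volume_preserving_equiv_real_prod.symm.integrableOn_comp_preimage
      Complex.measurableEquivRealProd.symm.measurableEmbedding).2
      (integrableOn_Ioo_reProdIm_Ioo hφ)
  rw [← Complex.volume_preserving_equiv_real_prod.symm.setIntegral_preimage_emb
    Complex.measurableEquivRealProd.symm.measurableEmbedding φ, h_preimage,
    Measure.volume_eq_prod, setIntegral_prod _ h_integrable]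
  simp only [intervalIntegral.integral_of_le ha, intervalIntegral.integral_of_le hb,
    integral_Ioc_eq_integral_Ioo, Complex.measurableEquivRealProd_symm_apply,
    Complex.mk_eq_add_mul_I]

end SetIntegral

variable {v : ℂ → ℝ} {A K : ℂ → ℂ}

-- Since `dv = Re (A dw)` and `K` is holomorphic, `d(v K dw) = K conj(A) (i dx ∧ dy)`.
lemma integral_right_sub_integral_left_eq_setIntegral (ha : a₁ ≤ a₂) (hb : b₁ ≤ b₂)
    (hv : ∀ w ∈ Icc a₁ a₂ ×ℂ Icc b₁ b₂, HasFDerivAt v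
      (Complex.reCLM.comp ((ContinuousLinearMap.toSpanSingleton ℂ (A w)).restrictScalars ℝ)) w)
    (hA : ContinuousOn A (Icc a₁ a₂ ×ℂ Icc b₁ b₂))
    (hK : ∀ w ∈ Icc a₁ a₂ ×ℂ Icc b₁ b₂, DifferentiableAt ℂ K w)
    (hv_periodic : ∀ x : ℝ, v (x + b₂ * Complex.I) = v (x + b₁ * Complex.I))
    (hK_periodic : ∀ x : ℝ, K (x + b₂ * Complex.I) = K (x + b₁ * Complex.I)) :
    (∫ y in b₁..b₂, v (a₂ + y * Complex.I) • K (a₂ + y * Complex.I)) -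
        ∫ y in b₁..b₂, v (a₁ + y * Complex.I) • K (a₁ + y * Complex.I) =
      ∫ w in Ioo a₁ a₂ ×ℂ Ioo b₁ b₂, K w * conj (A w) := by
  set V' : ℂ → ℂ →L[ℝ] ℂ := fun w ↦
    v w • (ContinuousLinearMap.toSpanSingleton ℂ (deriv K w)).restrictScalars ℝ +
      (Complex.reCLM.comp
        ((ContinuousLinearMap.toSpanSingleton ℂ (A w)).restrictScalars ℝ)).smulRight (K w)
  have hV' : ∀ w ∈ Icc a₁ a₂ ×ℂ Icc b₁ b₂, HasFDerivAt (fun w ↦ v w • K w) (V' w) w :=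
    fun w hw ↦ (hv w hw).smul ((hK w hw).hasDerivAt.hasFDerivAt.restrictScalars ℝ)
  have h_dbar (w : ℂ) :
      Complex.I * V' w 1 - V' w Complex.I = Complex.I * (K w * conj (A w)) := by
    apply Complex.ext <;>
    · simp only [V', add_apply, smul_apply, ContinuousLinearMap.coe_restrictScalars',
        ContinuousLinearMap.toSpanSingleton_apply, ContinuousLinearMap.smulRight_apply,
        ContinuousLinearMap.comp_apply, Complex.reCLM_apply, Complex.real_smul, smul_eq_mul,
        Complex.add_re, Complex.add_im, Complex.sub_re, Complex.sub_im, Complex.mul_re,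
        Complex.mul_im, Complex.ofReal_re, Complex.ofReal_im, Complex.I_re, Complex.I_im,
        Complex.one_re, Complex.one_im, Complex.conj_re, Complex.conj_im]
      ring
  have h_cont : ContinuousOn (fun w ↦ K w * conj (A w)) (Icc a₁ a₂ ×ℂ Icc b₁ b₂) :=
    .mul (fun w hw ↦ (hK w hw).continuousAt.continuousWithinAt)
      (Complex.continuous_conj.comp_continuousOn hA)
  have h_stokes := Complex.integral_boundary_rect_of_hasFDerivAt_real_off_countable
    (fun w ↦ v w • K w) V' ⟨a₁, b₁⟩ ⟨a₂, b₂⟩ ∅ countable_empty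
  simp only [smul_eq_mul, h_dbar, uIcc_of_le ha, uIcc_of_le hb, min_eq_left ha, min_eq_left hb,
    max_eq_right ha, max_eq_right hb, sdiff_empty, hv_periodic, hK_periodic, sub_self, zero_add,
    intervalIntegral.integral_const_mul, ← mul_sub] at h_stokes
  rw [← integral_integral_eq_setIntegral_reProdIm ha hb h_cont]
  refine mul_left_cancel₀ Complex.I_ne_zero (h_stokes ?_ ?_ ?_)
  · exact fun w hw ↦ (hV' w hw).continuousAt.continuousWithinAt
  · exact fun w hw ↦ hV' w (Ioo_reProdIm_Ioo_subset hw)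
  · exact (h_cont.const_smul Complex.I).integrableOn_compact (isCompact_Icc.reProdIm isCompact_Icc)

lemma mul_le_sq_add_sq {μ : ℝ} (hμ : 0 < μ) (x y : ℝ) :
    y * x ≤ 1 / (2 * μ) * x ^ 2 + μ / 2 * y ^ 2 := by
  have h_sq : 1 / (2 * μ) * x ^ 2 + μ / 2 * y ^ 2 - y * x = 1 / (2 * μ) * (x - μ * y) ^ 2 := by
    field_simp
    ring
  have h_nonneg : 0 ≤ 1 / (2 * μ) * (x - μ * y) ^ 2 := by positivity
  linarith

lemma integral_mul_re_right_sub_left_le (ha : a₁ ≤ a₂) (hb : b₁ ≤ b₂)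
    (hv : ∀ w ∈ Icc a₁ a₂ ×ℂ Icc b₁ b₂, HasFDerivAt v
      (Complex.reCLM.comp ((ContinuousLinearMap.toSpanSingleton ℂ (A w)).restrictScalars ℝ)) w)
    (hA : ContinuousOn A (Icc a₁ a₂ ×ℂ Icc b₁ b₂))
    (hK : ∀ w ∈ Icc a₁ a₂ ×ℂ Icc b₁ b₂, DifferentiableAt ℂ K w)
    (hv_periodic : ∀ x : ℝ, v (x + b₂ * Complex.I) = v (x + b₁ * Complex.I))
    (hK_periodic : ∀ x : ℝ, K (x + b₂ * Complex.I) = K (x + b₁ * Complex.I))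
    {μ : ℝ} (hμ : 0 < μ) :
    (∫ y in b₁..b₂, v (a₂ + y * Complex.I) * (K (a₂ + y * Complex.I)).re) -
        ∫ y in b₁..b₂, v (a₁ + y * Complex.I) * (K (a₁ + y * Complex.I)).re ≤
      1 / (2 * μ) * (∫ w in Ioo a₁ a₂ ×ℂ Ioo b₁ b₂, ‖A w‖ ^ 2) +
        μ / 2 * ∫ w in Ioo a₁ a₂ ×ℂ Ioo b₁ b₂, ‖K w‖ ^ 2 := by
  have hK_cont : ContinuousOn K (Icc a₁ a₂ ×ℂ Icc b₁ b₂) :=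
    fun w hw ↦ (hK w hw).continuousAt.continuousWithinAt
  have hv_cont : ContinuousOn v (Icc a₁ a₂ ×ℂ Icc b₁ b₂) :=
    fun w hw ↦ (hv w hw).continuousAt.continuousWithinAt
  have h_re : ∀ x ∈ Icc a₁ a₂, ∫ y in b₁..b₂, v (x + y * Complex.I) * (K (x + y * Complex.I)).re =
      (∫ y in b₁..b₂, v (x + y * Complex.I) • K (x + y * Complex.I)).re := by
    intro x hx
    have h_comm := Complex.reCLM.intervalIntegral_comp_comm
      (intervalIntegrable_comp_add_mul_I hb (hv_cont.smul hK_cont) hx)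
    simpa using h_comm
  have h_amgm (w : ℂ) :
      ‖K w * conj (A w)‖ ≤ 1 / (2 * μ) * ‖A w‖ ^ 2 + μ / 2 * ‖K w‖ ^ 2 := by
    rw [norm_mul, Complex.norm_conj]
    exact mul_le_sq_add_sq hμ ‖A w‖ ‖K w‖
  have hA_int : IntegrableOn (fun w ↦ 1 / (2 * μ) * ‖A w‖ ^ 2) (Ioo a₁ a₂ ×ℂ Ioo b₁ b₂) :=
    (integrableOn_Ioo_reProdIm_Ioo (hA.norm.pow 2)).const_mul _
  have hK_int : IntegrableOn (fun w ↦ μ / 2 * ‖K w‖ ^ 2) (Ioo a₁ a₂ ×ℂ Ioo b₁ b₂) :=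
    (integrableOn_Ioo_reProdIm_Ioo (hK_cont.norm.pow 2)).const_mul _
  rw [h_re a₂ ⟨ha, le_rfl⟩, h_re a₁ ⟨le_rfl, ha⟩, ← Complex.sub_re,
    integral_right_sub_integral_left_eq_setIntegral ha hb hv hA hK hv_periodic hK_periodic,
    ← integral_const_mul, ← integral_const_mul, ← integral_add hA_int hK_int]
  exact (Complex.re_le_norm _).trans
    (norm_integral_le_of_norm_le (hA_int.add hK_int) (ae_of_all _ h_amgm))

end RectangleStokes

section SphericalGradient

/-- The complex gradient of `sphericalPotential ∘ g` for holomorphic `g`: the differential of this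
function at `w` is `dz ↦ Re (sphericalGrad g w * dz)`. -/
noncomputable def sphericalGrad (g : ℂ → ℂ) (w : ℂ) : ℂ :=
  ((1 + ‖g w‖ ^ 2)⁻¹ : ℝ) • (conj (g w) * deriv g w)

variable {g : ℂ → ℂ} {w : ℂ} {s Q : Set ℂ} {m : ℕ} {T : ℝ}

lemma hasFDerivAt_sphericalPotential_comp (hg : DifferentiableAt ℂ g w) :
    HasFDerivAt (sphericalPotential ∘ g) (Complex.reCLM.comp
      ((ContinuousLinearMap.toSpanSingleton ℂ (sphericalGrad g w)).restrictScalars ℝ)) w := by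
  have h_norm_sq := (hg.hasDerivAt.hasFDerivAt.restrictScalars ℝ).norm_sq
  refine (((h_norm_sq.const_add 1).log (by positivity)).const_mul (1 / 2)).congr_fderiv ?_
  unfold sphericalGrad
  generalize (1 + ‖g w‖ ^ 2)⁻¹ = t
  ext
  simp only [one_div, smul_apply, ContinuousLinearMap.comp_apply,
    ContinuousLinearMap.coe_restrictScalars', ContinuousLinearMap.toSpanSingleton_apply,
    smul_eq_mul, coe_innerSL_apply, Complex.inner, Complex.mul_re, Complex.conj_re, Complex.mul_im,
    Complex.conj_im, nsmul_eq_mul, Nat.cast_ofNat, Complex.real_smul,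
    Complex.reCLM_apply, Complex.ofReal_re, Complex.ofReal_im]
  ring

lemma continuousOn_sphericalGrad (hg : AnalyticOnNhd ℂ g s) :
    ContinuousOn (sphericalGrad g) s := by
  have h_inv : Continuous fun z : ℂ ↦ (1 + ‖z‖ ^ 2)⁻¹ :=
    .inv₀ (by fun_prop) fun z ↦ by positivity
  exact (h_inv.comp_continuousOn hg.continuousOn).smul
    ((Complex.continuous_conj.comp_continuousOn hg.continuousOn).mul hg.deriv.continuousOn)

lemma norm_sphericalGrad_sq (g : ℂ → ℂ) (w : ℂ) :
    ‖sphericalGrad g w‖ ^ 2 = ‖deriv g w‖ ^ 2 * (‖g w‖ ^ 2 / (1 + ‖g w‖ ^ 2) ^ 2) := by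
  have h_inv : 0 ≤ (1 + ‖g w‖ ^ 2)⁻¹ := by positivity
  rw [sphericalGrad, norm_smul, norm_mul, Complex.norm_conj, norm_of_nonneg h_inv]
  field_simp

lemma norm_le_sqrt_of_sphericalPotential_le (h : sphericalPotential w ≤ T) :
    ‖w‖ ≤ √(exp (2 * T) - 1) := by
  have h_log : log (1 + ‖w‖ ^ 2) ≤ 2 * T := by
    unfold sphericalPotential at h
    linarith
  have h_exp := (log_le_iff_le_exp (by positivity)).1 h_log
  exact le_sqrt_of_sq_le (by linarith)

theorem FiberCardLEOn.setIntegral_norm_sphericalGrad_sq_le (hm : FiberCardLEOn g Q m)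
    (hQ : IsOpen Q) (hg : DifferentiableOn ℂ g Q) (hT₀ : 0 ≤ T)
    (hT : ∀ w ∈ Q, sphericalPotential (g w) ≤ T) :
    ∫ w in Q, ‖sphericalGrad g w‖ ^ 2 ≤ m * (2 * π * T) := by
  set φ : ℂ → ENNReal := fun y ↦ ENNReal.ofReal (‖y‖ ^ 2 / (1 + ‖y‖ ^ 2) ^ 2)
  set M := √(exp (2 * T) - 1)
  have hM : 1 + M ^ 2 = exp (2 * T) := by
    rw [sq_sqrt (by linarith [add_one_le_exp (2 * T)])]
    ring
  have h_image : g '' Q ⊆ closedBall 0 M := by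
    rintro _ ⟨w, hw, rfl⟩
    exact mem_closedBall_zero_iff.2 (norm_le_sqrt_of_sphericalPotential_le (hT w hw))
  rw [integral_eq_lintegral_of_nonneg_ae (ae_of_all _ fun w ↦ sq_nonneg _)
    (((continuousOn_sphericalGrad (hg.analyticOnNhd hQ)).norm.pow 2).aestronglyMeasurable
      hQ.measurableSet)]
  refine ENNReal.toReal_le_of_le_ofReal (by positivity) ?_
  calc ∫⁻ w in Q, ENNReal.ofReal (‖sphericalGrad g w‖ ^ 2)
      = ∫⁻ w in Q, ENNReal.ofReal (‖deriv g w‖ ^ 2) * φ (g w) := by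
        simp_rw [norm_sphericalGrad_sq, ENNReal.ofReal_mul (sq_nonneg _), φ]
    _ ≤ m * ∫⁻ y in g '' Q, φ y := hm.setLIntegral_deriv_sq_mul_comp_le hQ hg (by fun_prop)
    _ ≤ m * ∫⁻ y in closedBall 0 M, φ y := by gcongr
    _ ≤ m * ENNReal.ofReal (π * log (1 + M ^ 2)) := by
        gcongr
        exact setLIntegral_closedBall_norm_sq_div_le (sqrt_nonneg _)
    _ = ENNReal.ofReal (m * (2 * π * T)) := by
        rw [hM, log_exp, ENNReal.ofReal_mul m.cast_nonneg, ENNReal.ofReal_natCast]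
        congr 2
        ring

end SphericalGradient

section LogarithmicHerglotzKernel

/-- The Herglotz–Riesz kernel of `z₀` in the unit disk, in the logarithmic coordinate `w = log z`;
on the line `Re w = x` its real part is the Poisson kernel of `z₀ * exp x` on the unit circle. -/
noncomputable def logHerglotzKernel (z₀ w : ℂ) : ℂ :=
  (1 + conj z₀ * Complex.exp w) / (1 - conj z₀ * Complex.exp w)

variable {z₀ w : ℂ} {a x : ℝ}

lemma norm_conj_mul_exp (z₀ w : ℂ) : ‖conj z₀ * Complex.exp w‖ = ‖z₀‖ * exp w.re := by
  rw [norm_mul, Complex.norm_conj, Complex.norm_exp]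

lemma norm_mul_exp_lt_one (hz₀ : ‖z₀‖ < 1) (hx : x ≤ 0) : ‖z₀‖ * exp x < 1 :=
  (mul_le_of_le_one_right (norm_nonneg z₀) (exp_le_one_iff.2 hx)).trans_lt hz₀

lemma mul_exp_mem_ball (hz₀ : ‖z₀‖ < 1) (hx : x ≤ 0) : z₀ * exp x ∈ ball (0 : ℂ) 1 := by
  simpa [-Complex.ofReal_exp] using norm_mul_exp_lt_one hz₀ hx

lemma one_sub_norm_mul_exp_sq_pos (hz₀ : ‖z₀‖ < 1) (hx : x ≤ 0) :
    0 < 1 - (‖z₀‖ * exp x) ^ 2 := by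
  have h_lt := norm_mul_exp_lt_one hz₀ hx
  have h_nonneg : 0 ≤ ‖z₀‖ * exp x := by positivity
  nlinarith

lemma norm_one_sub_conj_mul_exp (z₀ : ℂ) (x y : ℝ) :
    ‖1 - conj z₀ * Complex.exp (x + y * Complex.I)‖ = ‖circleMap 0 1 y - z₀ * exp x‖ := by
  have h_factor : 1 - conj z₀ * Complex.exp (x + y * Complex.I) =
      Complex.exp (y * Complex.I) * conj (circleMap 0 1 y - z₀ * exp x) := by
    have h_inv : Complex.exp (y * Complex.I) * conj (Complex.exp (y * Complex.I)) = 1 := by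
      simp [Complex.mul_conj', Complex.norm_exp_ofReal_mul_I]
    simp only [circleMap, map_sub, map_mul, Complex.conj_ofReal, zero_add, Complex.ofReal_one,
      one_mul, mul_sub, h_inv, Complex.exp_add, ← Complex.ofReal_exp]
    ring
  rw [h_factor, norm_mul, Complex.norm_exp_ofReal_mul_I, one_mul, Complex.norm_conj]

lemma re_logHerglotzKernel (z₀ : ℂ) (x y : ℝ) :
    (logHerglotzKernel z₀ (x + y * Complex.I)).re =
      poissonKernel 0 (z₀ * exp x) (circleMap 0 1 y) := by
  have h_re := congrFun (poissonKernel_eq_re_herglotzRieszKernel (c := 0)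
    (w := conj z₀ * Complex.exp (x + y * Complex.I))) 1
  simp only [Function.comp_apply, herglotzRieszKernel_def, poissonKernel_def, sub_zero] at h_re
  rw [logHerglotzKernel, ← h_re, poissonKernel_def, norm_one_sub_conj_mul_exp, norm_conj_mul_exp]
  simp

lemma differentiableAt_logHerglotzKernel (hz₀ : ‖z₀‖ < 1) (hw : w.re ≤ 0) :
    DifferentiableAt ℂ (logHerglotzKernel z₀) w := by
  refine .div (by fun_prop) (by fun_prop) fun h_zero ↦ ?_
  have h_norm := norm_conj_mul_exp z₀ w
  rw [← sub_eq_zero.1 h_zero, norm_one] at h_norm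
  exact (norm_mul_exp_lt_one hz₀ hw).ne' h_norm

lemma norm_logHerglotzKernel_sq_le (hz₀ : ‖z₀‖ < 1) (hx : x ≤ 0) (y : ℝ) :
    ‖logHerglotzKernel z₀ (x + y * Complex.I)‖ ^ 2 ≤
      4 / (1 - (‖z₀‖ * exp x) ^ 2) * poissonKernel 0 (z₀ * exp x) (circleMap 0 1 y) := by
  have h_num : ‖1 + conj z₀ * Complex.exp (x + y * Complex.I)‖ ≤ 2 := by
    refine (norm_add_le _ _).trans ?_
    rw [norm_conj_mul_exp, norm_one, ← one_add_one_eq_two]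
    simpa using (norm_mul_exp_lt_one hz₀ hx).le
  have h_poisson : poissonKernel 0 (z₀ * exp x) (circleMap 0 1 y) =
      (1 - (‖z₀‖ * exp x) ^ 2) / ‖circleMap 0 1 y - z₀ * exp x‖ ^ 2 := by
    simp [poissonKernel_def, -Complex.ofReal_exp]
  rw [logHerglotzKernel, norm_div, norm_one_sub_conj_mul_exp, h_poisson, div_mul_div_comm,
    mul_comm (4 : ℝ), mul_div_mul_left _ _ (one_sub_norm_mul_exp_sq_pos hz₀ hx).ne', div_pow]
  gcongr
  nlinarith [norm_nonneg (1 + conj z₀ * Complex.exp (x + y * Complex.I))]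

lemma intervalIntegrable_poissonKernel (hw : w ∈ ball 0 1) :
    IntervalIntegrable (fun y ↦ poissonKernel 0 w (circleMap 0 1 y)) volume 0 (2 * π) := by
  simpa [CircleIntegrable] using
    circleIntegrable_poissonKernel_smul hw (circleIntegrable_const (1 : ℝ) 0 1)

lemma integral_poissonKernel (hw : w ∈ ball 0 1) :
    ∫ y in 0..2 * π, poissonKernel 0 w (circleMap 0 1 y) = 2 * π := by
  have h_average : (2 * π)⁻¹ * ∫ y in 0..2 * π, poissonKernel 0 w (circleMap 0 1 y) = 1 := by
    simpa [circleAverage_def, -mul_inv_rev] using circleAverage_poissonKernel_smul_const hw 1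
  rwa [inv_mul_eq_iff_eq_mul₀ (by positivity), mul_one] at h_average

lemma integral_norm_logHerglotzKernel_sq_le (hz₀ : ‖z₀‖ < 1) (hx : x ≤ 0) :
    ∫ y in 0..2 * π, ‖logHerglotzKernel z₀ (x + y * Complex.I)‖ ^ 2 ≤
      8 * π * (1 / (1 - (‖z₀‖ * exp x) ^ 2)) :=
  calc ∫ y in 0..2 * π, ‖logHerglotzKernel z₀ (x + y * Complex.I)‖ ^ 2
      ≤ ∫ y in 0..2 * π,
          4 / (1 - (‖z₀‖ * exp x) ^ 2) * poissonKernel 0 (z₀ * exp x) (circleMap 0 1 y) := by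
        refine intervalIntegral.integral_mono_on (by positivity) ?_
          ((intervalIntegrable_poissonKernel (mul_exp_mem_ball hz₀ hx)).const_mul _)
          fun y _ ↦ norm_logHerglotzKernel_sq_le hz₀ hx y
        refine Continuous.intervalIntegrable (continuous_iff_continuousAt.2 fun y ↦ ?_) _ _
        exact (ContinuousAt.comp (differentiableAt_logHerglotzKernel hz₀ (by simpa)).continuousAt
          (by fun_prop)).norm.pow 2
    _ = 8 * π * (1 / (1 - (‖z₀‖ * exp x) ^ 2)) := by
        rw [intervalIntegral.integral_const_mul, integral_poissonKernel (mul_exp_mem_ball hz₀ hx)]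
        ring

lemma continuousOn_one_div_one_sub_norm_mul_exp_sq (hz₀ : ‖z₀‖ < 1) :
    ContinuousOn (fun x ↦ 1 / (1 - (‖z₀‖ * exp x) ^ 2)) (Iic 0) :=
  .div (by fun_prop) (by fun_prop) fun _ hx ↦ (one_sub_norm_mul_exp_sq_pos hz₀ hx).ne'

lemma integral_one_div_one_sub_norm_mul_exp_sq_le (hz₀ : ‖z₀‖ < 1) (ha : a ≤ 0) :
    ∫ x in a..0, 1 / (1 - (‖z₀‖ * exp x) ^ 2) ≤ -a - 1 / 2 * log (1 - ‖z₀‖ ^ 2) := by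
  have h_subset : uIcc a 0 ⊆ Iic 0 := by simp [uIcc_of_le ha, Icc_subset_Iic_self]
  have h_deriv : ∀ x ∈ uIcc a 0, HasDerivAt (fun x ↦ x - 1 / 2 * log (1 - (‖z₀‖ * exp x) ^ 2))
      (1 / (1 - (‖z₀‖ * exp x) ^ 2)) x := by
    intro x hx
    have h_ne := (one_sub_norm_mul_exp_sq_pos hz₀ (h_subset hx)).ne'
    have h_inner : HasDerivAt (fun x ↦ 1 - (‖z₀‖ * exp x) ^ 2) (-(2 * (‖z₀‖ * exp x) ^ 2)) x :=
      ((((Real.hasDerivAt_exp x).const_mul ‖z₀‖).pow 2).const_sub 1).congr_deriv (by ring)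
    refine ((hasDerivAt_id x).sub ((h_inner.log h_ne).const_mul (1 / 2))).congr_deriv ?_
    generalize (‖z₀‖ * exp x) ^ 2 = q at h_ne ⊢
    field_simp
    ring
  rw [intervalIntegral.integral_eq_sub_of_hasDerivAt h_deriv
    ((continuousOn_one_div_one_sub_norm_mul_exp_sq hz₀).mono h_subset).intervalIntegrable]
  have h_log : log (1 - (‖z₀‖ * exp a) ^ 2) ≤ 0 :=
    log_nonpos (one_sub_norm_mul_exp_sq_pos hz₀ ha).le (by nlinarith [sq_nonneg (‖z₀‖ * exp a)])
  rw [exp_zero, mul_one]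
  linarith

theorem setIntegral_norm_logHerglotzKernel_sq_le (hz₀ : ‖z₀‖ < 1) (ha : a ≤ 0) :
    ∫ w in Ioo a 0 ×ℂ Ioo 0 (2 * π), ‖logHerglotzKernel z₀ w‖ ^ 2 ≤
      2 * π * (-(4 * a) - 2 * log (1 - ‖z₀‖ ^ 2)) := by
  have h_cont : ContinuousOn (fun w ↦ ‖logHerglotzKernel z₀ w‖ ^ 2)
      (Icc a 0 ×ℂ Icc 0 (2 * π)) := fun w hw ↦
    ((differentiableAt_logHerglotzKernel hz₀ hw.1.2).continuousAt.norm.pow 2).continuousWithinAt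
  have h_majorant : IntegrableOn (fun x ↦ 8 * π * (1 / (1 - (‖z₀‖ * exp x) ^ 2))) (Ioc a 0) :=
    ((((continuousOn_one_div_one_sub_norm_mul_exp_sq hz₀).mono
      Icc_subset_Iic_self).integrableOn_compact isCompact_Icc).mono_set
      Ioc_subset_Icc_self).const_mul _
  calc ∫ w in Ioo a 0 ×ℂ Ioo 0 (2 * π), ‖logHerglotzKernel z₀ w‖ ^ 2
      = ∫ x in a..0, ∫ y in 0..2 * π, ‖logHerglotzKernel z₀ (x + y * Complex.I)‖ ^ 2 :=
        (integral_integral_eq_setIntegral_reProdIm ha (by positivity) h_cont).symm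
    _ ≤ ∫ x in a..0, 8 * π * (1 / (1 - (‖z₀‖ * exp x) ^ 2)) := by
        rw [intervalIntegral.integral_of_le ha, intervalIntegral.integral_of_le ha]
        refine integral_mono_of_nonneg (ae_of_all _ fun x ↦
          intervalIntegral.integral_nonneg (by positivity) fun y _ ↦ by positivity) h_majorant ?_
        filter_upwards [ae_restrict_mem measurableSet_Ioc] with x hx
        exact integral_norm_logHerglotzKernel_sq_le hz₀ hx.2
    _ ≤ 8 * π * (-a - 1 / 2 * log (1 - ‖z₀‖ ^ 2)) := by
        rw [intervalIntegral.integral_const_mul]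
        gcongr
        exact integral_one_div_one_sub_norm_mul_exp_sq_le hz₀ ha
    _ = 2 * π * (-(4 * a) - 2 * log (1 - ‖z₀‖ ^ 2)) := by ring

end LogarithmicHerglotzKernel

section SelfImprovement

variable {F : ℂ → ℂ} {z₀ : ℂ} {m : ℕ} {a L T : ℝ}

lemma injOn_exp_im_mem_Ioo : InjOn Complex.exp {w | w.im ∈ Ioo 0 (2 * π)} := by
  intro w hw z hz hwz
  have h_shift : Complex.exp (w - π * Complex.I) = Complex.exp (z - π * Complex.I) := by
    rw [Complex.exp_sub, Complex.exp_sub, hwz]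
  have h_im (v : ℂ) : (v - π * Complex.I).im = v.im - π := by simp
  have h_mem {v : ℂ} (hv : v.im ∈ Ioo 0 (2 * π)) :
      -π < (v - π * Complex.I).im ∧ (v - π * Complex.I).im ≤ π := by
    rw [h_im]
    constructor <;> linarith [hv.1, hv.2]
  exact sub_left_injective <| Complex.exp_inj_of_neg_pi_lt_of_le_pi
    (h_mem hw).1 (h_mem hw).2 (h_mem hz).1 (h_mem hz).2 h_shift

lemma exp_mem_ball_of_re_neg {w : ℂ} (hw : w.re < 0) : Complex.exp w ∈ ball (0 : ℂ) 1 := by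
  rwa [mem_ball_zero_iff, Complex.norm_exp, exp_lt_one_iff]

lemma exp_mem_closedBall_of_re_nonpos {w : ℂ} (hw : w.re ≤ 0) :
    Complex.exp w ∈ closedBall (0 : ℂ) 1 := by
  rwa [mem_closedBall_zero_iff, Complex.norm_exp, exp_le_one_iff]

lemma exp_add_two_pi_mul_I (x : ℝ) :
    Complex.exp (x + (2 * π : ℝ) * Complex.I) = Complex.exp (x + (0 : ℝ) * Complex.I) := by
  simpa using Complex.exp_periodic x

lemma FiberCardLEOn.setIntegral_norm_sphericalGrad_comp_exp_sq_le
    (hm : FiberCardLEOn F (ball 0 1) m) (hF : DifferentiableOn ℂ F (ball 0 1))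
    (hT : ∀ z ∈ ball 0 1, sphericalPotential (F z) ≤ T) :
    ∫ w in Ioo a 0 ×ℂ Ioo 0 (2 * π), ‖sphericalGrad (F ∘ Complex.exp) w‖ ^ 2 ≤
      m * (2 * π * T) := by
  have h_maps : MapsTo Complex.exp (Ioo a 0 ×ℂ Ioo 0 (2 * π)) (ball 0 1) :=
    fun w hw ↦ exp_mem_ball_of_re_neg hw.1.2
  exact (hm.comp (injOn_exp_im_mem_Ioo.mono fun w hw ↦ hw.2)
    h_maps).setIntegral_norm_sphericalGrad_sq_le (isOpen_Ioo.reProdIm isOpen_Ioo)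
    (hF.comp (by fun_prop) h_maps)
    ((sphericalPotential_nonneg _).trans (hT 0 (mem_ball_self one_pos)))
    fun w hw ↦ hT _ (h_maps hw)

lemma integral_mul_re_logHerglotzKernel_eq_circleAverage (u : ℂ → ℝ) (z₀ : ℂ) :
    ∫ y in 0..2 * π, u (Complex.exp ((0 : ℝ) + y * Complex.I)) *
        (logHerglotzKernel z₀ ((0 : ℝ) + y * Complex.I)).re =
      2 * π * circleAverage (poissonKernel 0 z₀ • u) 0 1 := by
  rw [circleAverage_def, smul_eq_mul, mul_inv_cancel_left₀ (by positivity)]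
  congr with y
  rw [re_logHerglotzKernel, mul_comm]
  simp [circleMap]

lemma integral_mul_re_logHerglotzKernel_le {u : ℂ → ℝ} (hz₀ : ‖z₀‖ < 1) (ha : a ≤ 0)
    (hu : ContinuousOn u (sphere 0 (exp a))) (hL : ∀ z ∈ sphere 0 (exp a), u z ≤ L) :
    ∫ y in 0..2 * π, u (Complex.exp (a + y * Complex.I)) *
        (logHerglotzKernel z₀ (a + y * Complex.I)).re ≤ 2 * π * L := by
  have h_exp (y : ℝ) : Complex.exp (a + y * Complex.I) ∈ sphere (0 : ℂ) (exp a) := by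
    simp [Complex.norm_exp]
  have hp := mul_exp_mem_ball hz₀ ha
  have h_int := intervalIntegrable_poissonKernel hp
  simp only [re_logHerglotzKernel]
  calc ∫ y in 0..2 * π, u (Complex.exp (a + y * Complex.I)) *
          poissonKernel 0 (z₀ * exp a) (circleMap 0 1 y)
      ≤ ∫ y in 0..2 * π, L * poissonKernel 0 (z₀ * exp a) (circleMap 0 1 y) := by
        refine intervalIntegral.integral_mono_on (by positivity)
          (h_int.continuousOn_mul (hu.comp_continuous (by fun_prop) h_exp).continuousOn)
          (h_int.const_mul L) fun y _ ↦ ?_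
        exact mul_le_mul_of_nonneg_right (hL _ (h_exp y)) (poissonKernel_nonneg hp (by simp))
    _ = 2 * π * L := by
        rw [intervalIntegral.integral_const_mul, integral_poissonKernel hp, mul_comm]

theorem FiberCardLEOn.sphericalPotential_le (hm₀ : 0 < m) (hm : FiberCardLEOn F (ball 0 1) m)
    (hF : AnalyticOnNhd ℂ F (closedBall 0 1)) (ha : a ≤ 0)
    (hL : ∀ z ∈ sphere 0 (exp a), sphericalPotential (F z) ≤ L)
    (hT : ∀ z ∈ ball 0 1, sphericalPotential (F z) ≤ T) (hz₀ : ‖z₀‖ < 1) :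
    sphericalPotential (F z₀) ≤ L + T / 2 + m * (-(2 * a) - log (1 - ‖z₀‖ ^ 2)) := by
  set g := F ∘ Complex.exp
  set Q := Icc a 0 ×ℂ Icc 0 (2 * π)
  have hg : AnalyticOnNhd ℂ g Q := hF.comp (fun w _ ↦ analyticAt_cexp)
    fun w hw ↦ exp_mem_closedBall_of_re_nonpos hw.1.2
  have h_stokes := integral_mul_re_right_sub_left_le (v := sphericalPotential ∘ g)
    (A := sphericalGrad g) (K := logHerglotzKernel z₀) ha (by positivity : (0 : ℝ) ≤ 2 * π)
    (fun w hw ↦ hasFDerivAt_sphericalPotential_comp (hg w hw).differentiableAt)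
    (continuousOn_sphericalGrad hg)
    (fun w hw ↦ differentiableAt_logHerglotzKernel hz₀ hw.1.2)
    (fun x ↦ by simp only [g, Function.comp_apply, exp_add_two_pi_mul_I])
    (fun x ↦ by simp only [logHerglotzKernel, exp_add_two_pi_mul_I])
    (Nat.cast_pos.2 hm₀)
  have h_right := integral_mul_re_logHerglotzKernel_eq_circleAverage (sphericalPotential ∘ F) z₀
  have h_left := integral_mul_re_logHerglotzKernel_le (u := sphericalPotential ∘ F) hz₀ ha
    (continuous_sphericalPotential.comp_continuousOn (hF.continuousOn.mono
      (sphere_subset_closedBall.trans (closedBall_subset_closedBall (exp_le_one_iff.2 ha))))) hL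
  refine (sphericalPotential_le_circleAverage (mem_ball_zero_iff.2 hz₀) hF).trans
    (le_of_mul_le_mul_left ?_ two_pi_pos)
  calc 2 * π * circleAverage (poissonKernel 0 z₀ • (sphericalPotential ∘ F)) 0 1
      ≤ 2 * π * L + (1 / (2 * m) *
          (∫ w in Ioo a 0 ×ℂ Ioo 0 (2 * π), ‖sphericalGrad g w‖ ^ 2) +
            m / 2 * ∫ w in Ioo a 0 ×ℂ Ioo 0 (2 * π), ‖logHerglotzKernel z₀ w‖ ^ 2) :=
        h_right.symm.trans_le ((sub_le_iff_le_add'.1 h_stokes).trans (by gcongr; exact h_left))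
    _ ≤ 2 * π * L + (1 / (2 * m) * (m * (2 * π * T)) +
          m / 2 * (2 * π * (-(4 * a) - 2 * log (1 - ‖z₀‖ ^ 2)))) := by
        gcongr
        · exact hm.setIntegral_norm_sphericalGrad_comp_exp_sq_le
            (hF.differentiableOn.mono ball_subset_closedBall) hT
        · exact setIntegral_norm_logHerglotzKernel_sq_le hz₀ ha
    _ = 2 * π * (L + T / 2 + m * (-(2 * a) - log (1 - ‖z₀‖ ^ 2))) := by
        field_simp
        ring

end SelfImprovement

section Growth

variable {f : ℂ → ℂ} {m : ℕ} {ρ : ℝ}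

lemma norm_ofReal_mul (hρ : 0 ≤ ρ) (z : ℂ) : ‖(ρ : ℂ) * z‖ = ρ * ‖z‖ := by
  rw [norm_mul, Complex.norm_of_nonneg hρ]

lemma ofReal_mul_mem_ball (hρ : ρ ∈ Ioo 0 1) {z : ℂ} (hz : z ∈ closedBall (0 : ℂ) 1) :
    (ρ : ℂ) * z ∈ ball (0 : ℂ) 1 := by
  rw [mem_closedBall_zero_iff] at hz
  rw [mem_ball_zero_iff, norm_ofReal_mul hρ.1.le]
  exact (mul_le_of_le_one_right hρ.1.le hz).trans_lt hρ.2

lemma analyticOnNhd_comp_ofReal_mul (hf : AnalyticOnNhd ℂ f (ball 0 1)) (hρ : ρ ∈ Ioo 0 1) :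
    AnalyticOnNhd ℂ (fun z ↦ f (ρ * z)) (closedBall 0 1) :=
  hf.comp (analyticOnNhd_const.mul analyticOnNhd_id) fun _ hz ↦ ofReal_mul_mem_ball hρ hz

lemma FiberCardLEOn.comp_ofReal_mul (hm : FiberCardLEOn f (ball 0 1) m) (hρ : ρ ∈ Ioo 0 1) :
    FiberCardLEOn (fun z ↦ f (ρ * z)) (ball 0 1) m :=
  hm.comp (mul_right_injective₀ (Complex.ofReal_ne_zero.2 hρ.1.ne')).injOn
    fun _ hz ↦ ofReal_mul_mem_ball hρ (ball_subset_closedBall hz)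

lemma norm_comp_ofReal_mul_le_one (hf_half : ∀ z ∈ closedBall (0 : ℂ) (1 / 2), ‖f z‖ ≤ 1)
    (hρ : ρ ∈ Ioo 0 1) : ∀ z ∈ closedBall (0 : ℂ) (1 / 2), ‖f (ρ * z)‖ ≤ 1 := by
  intro z hz
  refine hf_half _ (mem_closedBall_zero_iff.2 ?_)
  rw [norm_ofReal_mul hρ.1.le]
  exact (mul_le_of_le_one_left (norm_nonneg z) hρ.2.le).trans (mem_closedBall_zero_iff.1 hz)

lemma sphericalPotential_le_of_norm_le_one {w : ℂ} (hw : ‖w‖ ≤ 1) :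
    sphericalPotential w ≤ 1 / 2 * log 2 := by
  unfold sphericalPotential
  gcongr
  nlinarith [norm_nonneg w]

lemma log_one_sub_sub_log_two_le {r : ℝ} (hr₀ : 0 ≤ r) (hr₁ : r < 1) :
    log (1 - r) - log 2 ≤ log (1 - (r / ((1 + r) / 2)) ^ 2) := by
  have h_eq : 1 - (r / ((1 + r) / 2)) ^ 2 = (1 - r) * (1 + 3 * r) / (1 + r) ^ 2 := by
    field_simp
    ring
  rw [← log_div (by linarith) two_ne_zero, h_eq]
  refine log_le_log (by linarith) ?_
  rw [le_div_iff₀ (by positivity)]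
  nlinarith [mul_nonneg (sub_nonneg.2 hr₁.le) hr₀]

lemma FiberCardLEOn.sphericalPotential_add_log_le_half_add (hm₀ : 0 < m)
    (hm : FiberCardLEOn f (ball 0 1) m) (hf : AnalyticOnNhd ℂ f (ball 0 1))
    (hf_half : ∀ z ∈ closedBall (0 : ℂ) (1 / 2), ‖f z‖ ≤ 1) {S : ℝ}
    (hS : ∀ z ∈ ball (0 : ℂ) 1, sphericalPotential (f z) + 2 * m * log (1 - ‖z‖) ≤ S)
    {z : ℂ} (hz : z ∈ ball (0 : ℂ) 1) :
    sphericalPotential (f z) + 2 * m * log (1 - ‖z‖) ≤ (S + (1 + 8 * m) * log 2) / 2 := by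
  rw [mem_ball_zero_iff] at hz
  set r := ‖z‖
  have hr : 0 ≤ r := norm_nonneg z
  set ρ := (1 + r) / 2 with hρ_def
  have hρ : ρ ∈ Ioo 0 1 := ⟨by positivity, by linarith⟩
  have hzρ : ‖z / ρ‖ = r / ρ := by rw [norm_div, Complex.norm_of_nonneg hρ.1.le]
  have h_cancel : (ρ : ℂ) * (z / ρ) = z := mul_div_cancel₀ z (Complex.ofReal_ne_zero.2 hρ.1.ne')
  have hT : ∀ w ∈ ball (0 : ℂ) 1,
      sphericalPotential (f (ρ * w)) ≤ S - 2 * m * log (1 - ρ) := by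
    intro w hw
    have h_norm : ‖(ρ : ℂ) * w‖ ≤ ρ := by
      rw [norm_ofReal_mul hρ.1.le]
      exact mul_le_of_le_one_right hρ.1.le (mem_ball_zero_iff.1 hw).le
    have h_log : 2 * m * log (1 - ρ) ≤ 2 * m * log (1 - ‖(ρ : ℂ) * w‖) := by
      gcongr
      linarith [hρ.2]
    linarith [hS _ (ofReal_mul_mem_ball hρ (ball_subset_closedBall hw))]
  have h_bound := (hm.comp_ofReal_mul hρ).sphericalPotential_le hm₀ (a := -log 2) (z₀ := z / ρ)
    (analyticOnNhd_comp_ofReal_mul hf hρ) (neg_nonpos.2 (log_nonneg one_le_two))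
    (fun w hw ↦ sphericalPotential_le_of_norm_le_one (norm_comp_ofReal_mul_le_one hf_half hρ w
      (by simpa [exp_neg, exp_log] using hw.le))) hT
    (by rw [hzρ, div_lt_one hρ.1]; linarith)
  simp only [h_cancel, hzρ] at h_bound
  have h_log_ρ : log (1 - ρ) = log (1 - r) - log 2 := by
    rw [← log_div (by linarith) two_ne_zero]
    congr 1
    ring
  have h_log := mul_le_mul_of_nonneg_left (log_one_sub_sub_log_two_le hr hz) m.cast_nonneg (α := ℝ)
  rw [h_log_ρ] at h_bound
  rw [← hρ_def] at h_log
  linarith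

lemma FiberCardLEOn.sphericalPotential_add_log_le_of_bddAbove (hm₀ : 0 < m)
    (hm : FiberCardLEOn f (ball 0 1) m) (hf : AnalyticOnNhd ℂ f (ball 0 1))
    (hf_half : ∀ z ∈ closedBall (0 : ℂ) (1 / 2), ‖f z‖ ≤ 1)
    (hf_bdd : BddAbove ((sphericalPotential ∘ f) '' ball 0 1)) {z : ℂ}
    (hz : z ∈ ball (0 : ℂ) 1) :
    sphericalPotential (f z) + 2 * m * log (1 - ‖z‖) ≤ (1 + 8 * m) * log 2 := by
  set h : ℂ → ℝ := fun z ↦ sphericalPotential (f z) + 2 * m * log (1 - ‖z‖)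
  have h_bdd : BddAbove (h '' ball 0 1) := by
    obtain ⟨B, hB⟩ := hf_bdd
    refine ⟨B, ?_⟩
    rintro _ ⟨z, hz, rfl⟩
    have h_log : 2 * m * log (1 - ‖z‖) ≤ 0 :=
      mul_nonpos_of_nonneg_of_nonpos (by positivity) (log_nonpos
        (sub_nonneg.2 (mem_ball_zero_iff.1 hz).le) (sub_le_self 1 (norm_nonneg z)))
    exact (add_le_of_nonpos_right h_log).trans (hB ⟨z, hz, rfl⟩)
  have h_le_sup : ∀ z ∈ ball (0 : ℂ) 1, h z ≤ sSup (h '' ball 0 1) :=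
    fun z hz ↦ le_csSup h_bdd ⟨z, hz, rfl⟩
  have h_sup : sSup (h '' ball 0 1) ≤ (sSup (h '' ball 0 1) + (1 + 8 * m) * log 2) / 2 := by
    refine csSup_le ((nonempty_ball.2 one_pos).image h) ?_
    rintro _ ⟨z, hz, rfl⟩
    exact hm.sphericalPotential_add_log_le_half_add hm₀ hf hf_half h_le_sup hz
  linarith [h_le_sup z hz]

lemma FiberCardLEOn.sphericalPotential_add_log_le (hm₀ : 0 < m)
    (hm : FiberCardLEOn f (ball 0 1) m) (hf : AnalyticOnNhd ℂ f (ball 0 1))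
    (hf_half : ∀ z ∈ closedBall (0 : ℂ) (1 / 2), ‖f z‖ ≤ 1) {z : ℂ}
    (hz : z ∈ ball (0 : ℂ) 1) :
    sphericalPotential (f z) + 2 * m * log (1 - ‖z‖) ≤ (1 + 8 * m) * log 2 := by
  have h_dilate : ∀ ρ ∈ Ioo (0 : ℝ) 1,
      sphericalPotential (f (ρ * z)) + 2 * m * log (1 - ‖z‖) ≤ (1 + 8 * m) * log 2 := by
    intro ρ hρ
    have hfρ := analyticOnNhd_comp_ofReal_mul hf hρ
    have h_bdd := (isCompact_closedBall (0 : ℂ) 1).bddAbove_image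
      (continuous_sphericalPotential.comp_continuousOn hfρ.continuousOn)
    exact (hm.comp_ofReal_mul hρ).sphericalPotential_add_log_le_of_bddAbove hm₀
      (hfρ.mono ball_subset_closedBall) (norm_comp_ofReal_mul_le_one hf_half hρ)
      (h_bdd.mono (image_mono ball_subset_closedBall)) hz
  have h_cont : ContinuousAt
      (fun ρ : ℝ ↦ sphericalPotential (f (ρ * z)) + 2 * m * log (1 - ‖z‖)) 1 := by
    have hfz : ContinuousAt f ((1 : ℝ) * z) := by simpa using (hf z hz).continuousAt
    exact (continuous_sphericalPotential.continuousAt.comp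
      (hfz.comp (f := fun ρ : ℝ ↦ (ρ : ℂ) * z) (by fun_prop))).add continuousAt_const
  have h_lim := h_cont.tendsto.mono_left (nhdsWithin_le_nhds (s := Iio 1))
  simp only [Complex.ofReal_one, one_mul] at h_lim
  exact le_of_tendsto h_lim (mem_of_superset (Ioo_mem_nhdsLT one_pos) h_dilate)

lemma log_norm_le_sphericalPotential (w : ℂ) : log ‖w‖ ≤ sphericalPotential w := by
  rcases eq_or_ne w 0 with rfl | hw
  · simp [sphericalPotential]
  have h_log : log (‖w‖ ^ 2) ≤ log (1 + ‖w‖ ^ 2) :=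
    log_le_log (pow_pos (norm_pos_iff.2 hw) 2) (by linarith)
  rw [log_pow, Nat.cast_ofNat] at h_log
  unfold sphericalPotential
  linarith

theorem FiberCardLEOn.norm_mul_one_sub_norm_pow_le (hm₀ : 0 < m)
    (hm : FiberCardLEOn f (ball 0 1) m) (hf : AnalyticOnNhd ℂ f (ball 0 1))
    (hf_half : ∀ z ∈ closedBall (0 : ℂ) (1 / 2), ‖f z‖ ≤ 1) {z : ℂ}
    (hz : z ∈ ball (0 : ℂ) 1) :
    ‖f z‖ * (1 - ‖z‖) ^ (2 * m) ≤ 2 ^ (1 + 8 * m) := by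
  have h_pos : 0 < 1 - ‖z‖ := sub_pos.2 (mem_ball_zero_iff.1 hz)
  rcases eq_or_ne (f z) 0 with h_zero | h_ne
  · rw [h_zero, norm_zero, zero_mul]
    positivity
  rw [← log_le_log_iff (by positivity) (by positivity), log_mul (by positivity) (by positivity),
    log_pow, log_pow]
  push_cast
  linarith [hm.sphericalPotential_add_log_le hm₀ hf hf_half hz,
    log_norm_le_sphericalPotential (f z)]

end Growth

section Valency

lemma summable_enat {ι : Type*} (u : ι → ℕ∞) : Summable u :=
  (hasSum_of_isLUB _ isLUB_iSup).summable

lemma ordAt_of_analyticAt {g : ℂ → ℂ} {z : ℂ} (hg : AnalyticAt ℂ g z) :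
    ordAt g z = analyticOrderAt g z :=
  dif_pos hg

lemma ordAt_comp {g φ : ℂ → ℂ} {z : ℂ} (hφ : AnalyticAt ℂ φ z) (hφ' : deriv φ z ≠ 0) :
    ordAt (g ∘ φ) z = ordAt g (φ z) := by
  have h_iff : AnalyticAt ℂ (g ∘ φ) z ↔ AnalyticAt ℂ g (φ z) :=
    analyticAt_comp_iff_of_deriv_ne_zero hφ hφ'
  by_cases hg : AnalyticAt ℂ g (φ z)
  · rw [ordAt_of_analyticAt hg, ordAt_of_analyticAt (h_iff.2 hg),
      analyticOrderAt_comp_of_deriv_ne_zero hφ hφ']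
  · simp only [ordAt, dif_neg hg, dif_neg (mt h_iff.1 hg)]

lemma ordAt_const_mul {c : ℂ} (hc : c ≠ 0) (g : ℂ → ℂ) (z : ℂ) :
    ordAt (fun w ↦ c * g w) z = ordAt g z := by
  have hc_an : AnalyticAt ℂ (fun _ : ℂ ↦ c) z := analyticAt_const
  by_cases hg : AnalyticAt ℂ g z
  · rw [ordAt_of_analyticAt hg, ordAt_of_analyticAt (hc_an.fun_mul hg)]
    exact (analyticOrderAt_mul hc_an hg).trans
      (by rw [hc_an.analyticOrderAt_eq_zero.2 hc, zero_add])
  · have hcg : ¬AnalyticAt ℂ (fun w ↦ c * g w) z := fun h ↦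
      hg (by simpa [hc] using (analyticAt_const (v := c⁻¹)).fun_mul h)
    simp only [ordAt, dif_neg hg, dif_neg hcg]

lemma sum_ordAt_le_solCount (g : ℂ → ℂ) {Ω : Set ℂ} {s : Finset ℂ} (hs : ↑s ⊆ Ω) :
    ∑ z ∈ s, ordAt g z ≤ solCount g Ω := by
  classical
  rw [← Finset.sum_subtype_of_mem (p := (· ∈ Ω)) _ hs]
  exact (summable_enat _).sum_le_tsum _ fun _ _ ↦ zero_le

lemma solCount_mono (g : ℂ → ℂ) {s t : Set ℂ} (hst : s ⊆ t) : solCount g s ≤ solCount g t := by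
  refine (summable_enat _).tsum_le_of_sum_le fun F ↦ ?_
  refine (Finset.sum_map F (Function.Embedding.subtype _) (ordAt g)).symm.trans_le
    (sum_ordAt_le_solCount g fun z hz ↦ hst ?_)
  obtain ⟨w, -, rfl⟩ := Finset.mem_map.1 hz
  exact w.2

lemma solCount_comp (g : ℂ → ℂ) {φ : ℂ → ℂ} {Ω : Set ℂ} (hφ : AnalyticOnNhd ℂ φ Ω)
    (hφ' : ∀ z ∈ Ω, deriv φ z ≠ 0) (hφ_inj : InjOn φ Ω) :
    solCount (g ∘ φ) Ω = solCount g (φ '' Ω) :=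
  (tsum_congr fun z : Ω ↦ ordAt_comp (hφ z z.2) (hφ' z z.2)).trans
    (tsum_image (ordAt g) hφ_inj).symm

namespace IsPValentOn

variable {f : ℂ → ℂ} {Ω : Set ℂ} {m : ℕ}

lemma comp {φ : ℂ → ℂ} (hf : IsPValentOn f (φ '' Ω) m) (hφ : AnalyticOnNhd ℂ φ Ω)
    (hφ' : ∀ z ∈ Ω, deriv φ z ≠ 0) (hφ_inj : InjOn φ Ω) : IsPValentOn (f ∘ φ) Ω m :=
  fun c ↦ (solCount_comp (fun z ↦ f z - c) hφ hφ' hφ_inj).trans_le (hf c)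

lemma const_mul_sub (hf : IsPValentOn f Ω m) {c : ℂ} (hc : c ≠ 0) (b : ℂ) :
    IsPValentOn (fun z ↦ c * (f z - b)) Ω m := by
  intro y
  have h_eq : (fun z ↦ c * (f z - b) - y) = fun z ↦ c * (f z - (b + y / c)) := by
    funext z
    field_simp
    ring
  rw [h_eq]
  exact (tsum_congr fun z ↦ ordAt_const_mul hc _ _).trans_le (hf _)

lemma not_eventually_eq (hf : IsPValentOn f Ω m) {z : ℂ} (hz : z ∈ Ω) (c : ℂ) :
    ¬∀ᶠ w in 𝓝 z, f w = c := by
  intro h_eq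
  have h_zero : ∀ᶠ w in 𝓝 z, f w - c = 0 := h_eq.mono fun w hw ↦ sub_eq_zero.2 hw
  have h_an : AnalyticAt ℂ (fun w ↦ f w - c) z :=
    analyticAt_const.congr (h_zero.mono fun _ ↦ Eq.symm)
  have h_le := (sum_ordAt_le_solCount _ (s := {z}) (by simpa using hz)).trans (hf c)
  rw [Finset.sum_singleton, ordAt_of_analyticAt h_an, analyticOrderAt_eq_top.2 h_zero] at h_le
  exact ENat.natCast_ne_top m (top_le_iff.1 h_le)

lemma fiberCardLEOn (hf : IsPValentOn f Ω m) (hf_an : AnalyticOnNhd ℂ f Ω) :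
    FiberCardLEOn f Ω m := by
  intro c
  by_contra! h_lt
  obtain ⟨t, ht, ht_card⟩ := exists_subset_encard_eq (Order.add_one_le_of_lt h_lt)
  lift t to Finset ℂ using finite_of_encard_eq_coe (k := m + 1) (mod_cast ht_card)
  have h_one : ∀ z ∈ t, 1 ≤ ordAt (fun w ↦ f w - c) z := by
    intro z hz
    have h_an : AnalyticAt ℂ (fun w ↦ f w - c) z := (hf_an z (ht hz).1).sub analyticAt_const
    rw [ordAt_of_analyticAt h_an, Order.one_le_iff_ne_zero, h_an.analyticOrderAt_ne_zero]
    exact sub_eq_zero.2 (ht hz).2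
  have h_card : (t.card : ℕ∞) ≤ m := by
    simpa using (Finset.sum_le_sum h_one).trans
      ((sum_ordAt_le_solCount _ fun z hz ↦ (ht hz).1).trans (hf c))
  rw [encard_coe_eq_coe_finsetCard] at ht_card
  rw [ht_card] at h_card
  exact absurd h_card (by exact_mod_cast Nat.not_succ_le_self m)

end IsPValentOn

end Valency

section FewZeros

variable {g : ℂ → ℂ} {c : ℂ} {R d : ℝ} {m : ℕ}

lemma sum_divisor_le_of_solCount_le {U : Set ℂ} (hg : AnalyticOnNhd ℂ g U)
    (hm : solCount g U ≤ m) {s : Finset ℂ} (hs : ↑s ⊆ U) :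
    ∑ z ∈ s, MeromorphicOn.divisor g U z ≤ m := by
  have h_divisor : ∀ z ∈ s, MeromorphicOn.divisor g U z = ((ordAt g z).toNat : ℤ) := by
    intro z hz
    rw [MeromorphicOn.AnalyticOnNhd.divisor_apply hg (hs hz), ordAt_of_analyticAt (hg z (hs hz))]
    cases analyticOrderAt g z <;> simp
  have h_sum : ∑ z ∈ s, ((ordAt g z).toNat : ℕ∞) ≤ m :=
    (Finset.sum_le_sum fun z _ ↦ ENat.natCast_toNat_le_self _).trans
      ((sum_ordAt_le_solCount g hs).trans hm)
  rw [Finset.sum_congr rfl h_divisor]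
  exact_mod_cast h_sum

lemma circleAverage_log_norm_le_of_solCount_le (hd : 0 < d) (hdR : d ≤ R)
    (hg : AnalyticOnNhd ℂ g (closedBall c R)) (hm : solCount g (closedBall c R) ≤ m)
    (hg₀ : ∀ z ∈ ball c d, g z ≠ 0) :
    circleAverage (fun z ↦ log ‖g z‖) c R ≤ log ‖g c‖ + m * log (R / d) := by
  have hR : 0 < R := hd.trans_le hdR
  have h_jensen := AnalyticOnNhd.circleAverage_log_norm hR.ne' (by rwa [abs_of_pos hR])
    (hg₀ c (mem_ball_self hd))
  rw [abs_of_pos hR] at h_jensen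
  set D := MeromorphicOn.divisor g (closedBall c R)
  have hD_fin : D.support.Finite := D.finiteSupport (isCompact_closedBall c R)
  have hD_mem : ↑hD_fin.toFinset ⊆ closedBall c R := by
    simpa using D.supportWithinDomain
  have hD_nonneg : 0 ≤ D := MeromorphicOn.AnalyticOnNhd.divisor_nonneg hg
  have hD_far : ∀ z ∈ hD_fin.toFinset, d ≤ ‖c - z‖ := by
    intro z hz
    by_contra! h_near
    refine hD_fin.mem_toFinset.1 hz ?_
    rw [MeromorphicOn.AnalyticOnNhd.divisor_apply hg (hD_mem hz),
      (hg z (hD_mem hz)).analyticOrderAt_eq_zero.2 (hg₀ z (mem_ball_iff_norm'.2 h_near))]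
    simp
  have h_term : ∀ z ∈ hD_fin.toFinset, D z * log (R * ‖c - z‖⁻¹) ≤ D z * log (R / d) := by
    intro z hz
    have hD_z : (0 : ℝ) ≤ D z := by exact_mod_cast hD_nonneg z
    have h_pos := hd.trans_le (hD_far z hz)
    rw [← div_eq_mul_inv]
    gcongr
    exact hD_far z hz
  have h_count : ∑ z ∈ hD_fin.toFinset, (D z : ℝ) ≤ m := by
    exact_mod_cast sum_divisor_le_of_solCount_le hg hm hD_mem
  rw [h_jensen, finsum_eq_sum_of_support_subset (s := hD_fin.toFinset) _
    (fun z hz ↦ by rw [hD_fin.coe_toFinset]; exact fun h ↦ hz (by simp [h])), add_comm]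
  gcongr
  refine (Finset.sum_le_sum h_term).trans ?_
  rw [← Finset.sum_mul]
  exact mul_le_mul_of_nonneg_right h_count (log_nonneg ((one_le_div hd).2 hdR))

-- Jensen bounds the mean of `log ‖g‖` through the few zeros, Harnack transports the bound to `w`.
lemma log_norm_le_of_solCount_le (hd : 0 < d) (hdR : d ≤ R)
    (hg : AnalyticOnNhd ℂ g (closedBall c R)) (hm : solCount g (closedBall c R) ≤ m)
    (hg₀ : ∀ z ∈ ball c d, g z ≠ 0) {B : ℝ} (hB : 1 ≤ B) (hgB : ∀ z ∈ sphere c R, ‖g z‖ ≤ B)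
    {w : ℂ} (hw : w ∈ ball c R) (hgw : g w ≠ 0) :
    log ‖g w‖ ≤ log B -
      (R - ‖w - c‖) / (R + ‖w - c‖) * (log B - (log ‖g c‖ + m * log (R / d))) := by
  have hgB_log : ∀ z ∈ sphere c R, log ‖g z‖ ≤ log B := by
    intro z hz
    rcases eq_or_ne (g z) 0 with h_zero | h_ne
    · simpa [h_zero] using log_nonneg hB
    · exact log_le_log (norm_pos_iff.2 h_ne) (hgB z hz)
  have h_ratio : 0 ≤ (R - ‖w - c‖) / (R + ‖w - c‖) :=
    div_nonneg (sub_nonneg.2 (mem_ball_iff_norm.1 hw).le)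
      (add_nonneg (hd.le.trans hdR) (norm_nonneg _))
  have h_avg := circleAverage_log_norm_le_of_solCount_le hd hdR hg hm hg₀
  refine (log_norm_le_sub_mul_circleAverage hw hg hgw hgB_log).trans ?_
  gcongr

end FewZeros

section PowerSeries

variable {a : ℕ → ℂ} {f : ℂ → ℂ} {R : ℝ}

lemma hasFPowerSeriesOnBall_ofScalars (hR : 0 < R)
    (hf : ∀ z ∈ ball (0 : ℂ) R, HasSum (fun k ↦ a k * z ^ k) (f z)) :
    HasFPowerSeriesOnBall f (FormalMultilinearSeries.ofScalars ℂ a) 0 (ENNReal.ofReal R) where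
  r_le := by
    refine ENNReal.le_of_forall_nnreal_lt fun r hr ↦ ?_
    have hr_mem : ((r : ℝ) : ℂ) ∈ ball (0 : ℂ) R := by
      simpa using (ENNReal.coe_lt_ofReal.1 hr)
    refine FormalMultilinearSeries.le_radius_of_summable _ ((hf _ hr_mem).summable.norm.congr ?_)
    intro k
    simp
  r_pos := ENNReal.ofReal_pos.2 hR
  hasSum := by
    intro z hz
    rw [Metric.eball_ofReal] at hz
    simpa [FormalMultilinearSeries.ofScalars_apply_eq, mul_comm] using hf z hz

lemma analyticOnNhd_of_hasSum (hR : 0 < R)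
    (hf : ∀ z ∈ ball (0 : ℂ) R, HasSum (fun k ↦ a k * z ^ k) (f z)) :
    AnalyticOnNhd ℂ f (ball 0 R) := by
  simpa only [Metric.eball_ofReal] using (hasFPowerSeriesOnBall_ofScalars hR hf).analyticOnNhd

lemma eq_coeff_zero_of_hasSum (hR : 0 < R)
    (hf : ∀ z ∈ ball (0 : ℂ) R, HasSum (fun k ↦ a k * z ^ k) (f z)) : f 0 = a 0 := by
  refine (hf 0 (mem_ball_self hR)).unique ?_
  simpa using hasSum_single (f := fun k ↦ a k * (0 : ℂ) ^ k) 0 fun k hk ↦ by simp [hk]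

lemma coeff_eq_iteratedDeriv_div_factorial (hR : 0 < R)
    (hf : ∀ z ∈ ball (0 : ℂ) R, HasSum (fun k ↦ a k * z ^ k) (f z)) (k : ℕ) :
    a k = iteratedDeriv k f 0 / k.factorial := by
  have h_series := (hasFPowerSeriesOnBall_ofScalars hR hf).hasFPowerSeriesAt
  have h_eq := h_series.eq_formalMultilinearSeries h_series.analyticAt.hasFPowerSeriesAt
  simpa only [FormalMultilinearSeries.coeff_ofScalars]
    using congrArg (fun p ↦ FormalMultilinearSeries.coeff p k) h_eq

lemma norm_coeff_mul_pow_le {r B : ℝ} (hr : 0 < r) (hrR : r < R)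
    (hf : ∀ z ∈ ball (0 : ℂ) R, HasSum (fun k ↦ a k * z ^ k) (f z))
    (hB : ∀ z ∈ sphere (0 : ℂ) r, ‖f z‖ ≤ B) (k : ℕ) : ‖a k‖ * r ^ k ≤ B := by
  have h_diff : DifferentiableOn ℂ f (closure (ball 0 r)) := by
    rw [closure_ball _ hr.ne']
    exact ((analyticOnNhd_of_hasSum (hr.trans hrR) hf).mono
      (closedBall_subset_ball hrR)).differentiableOn
  have h_cauchy := Complex.norm_iteratedDeriv_le_of_forall_mem_sphere_norm_le k hr
    h_diff.diffContOnCl hB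
  rw [coeff_eq_iteratedDeriv_div_factorial (hr.trans hrR) hf, norm_div, Complex.norm_natCast,
    ← le_div_iff₀ (by positivity), div_le_iff₀ (by positivity)]
  exact h_cauchy.trans_eq (by ring)

variable {z s : ℂ} {ρ C : ℝ}

lemma norm_sub_sum_range_le (hρ : 0 < ρ) (haC : ∀ k, ‖a k‖ * ρ ^ k ≤ C)
    (hs : HasSum (fun k ↦ a k * z ^ k) s) (hz : ‖z‖ ≤ ρ / 2) (n : ℕ) :
    ‖s - ∑ i ∈ Finset.range n, a i * z ^ i‖ ≤ C * (‖z‖ / ρ) ^ n * 2 := by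
  have h_tail := (hasSum_nat_add_iff' n).2 hs
  rw [← h_tail.tsum_eq]
  refine tsum_of_norm_bounded (hasSum_geometric_two.mul_left (C * (‖z‖ / ρ) ^ n)) fun k ↦ ?_
  have hC : 0 ≤ C := (by positivity : 0 ≤ ‖a 0‖ * ρ ^ 0).trans (haC 0)
  have h_ratio : ‖z‖ / ρ ≤ 1 / 2 := by
    rw [div_le_iff₀ hρ]
    linarith
  calc ‖a (k + n) * z ^ (k + n)‖
      = ‖a (k + n)‖ * ρ ^ (k + n) * (‖z‖ / ρ) ^ (k + n) := by
        rw [norm_mul, norm_pow, div_pow]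
        field_simp
    _ ≤ C * (‖z‖ / ρ) ^ (k + n) := by gcongr; exact haC _
    _ = C * (‖z‖ / ρ) ^ n * (‖z‖ / ρ) ^ k := by ring
    _ ≤ C * (‖z‖ / ρ) ^ n * (1 / 2) ^ k := by gcongr

lemma norm_le_of_norm_coeff_le {m : ℕ} {ε : ℝ} (ha₀ : a 0 = 0)
    (haε : ∀ i ∈ Finset.Icc 1 m, ‖a i‖ ≤ ε) (hρ : 0 < ρ) (haC : ∀ k, ‖a k‖ * ρ ^ k ≤ C)
    (hs : HasSum (fun k ↦ a k * z ^ k) s) (hz : ‖z‖ ≤ ρ / 2) (hz₁ : ‖z‖ ≤ 1) :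
    ‖s‖ ≤ m * ε + C * (‖z‖ / ρ) ^ (m + 1) * 2 := by
  have h_head : ‖∑ i ∈ Finset.range (m + 1), a i * z ^ i‖ ≤ m * ε := by
    rw [Finset.sum_range_succ', ha₀, zero_mul, add_zero]
    refine (norm_sum_le_of_le _ (f := fun i ↦ a (i + 1) * z ^ (i + 1)) fun i hi ↦ ?_).trans_eq
      (b := ∑ _i ∈ Finset.range m, ε) (by simp)
    rw [norm_mul, norm_pow]
    have hi_mem : i + 1 ∈ Finset.Icc 1 m :=
      Finset.mem_Icc.2 ⟨by omega, Finset.mem_range.1 hi⟩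
    exact (mul_le_of_le_one_right (norm_nonneg _) (pow_le_one₀ (norm_nonneg z) hz₁)).trans
      (haε _ hi_mem)
  have h_tail := norm_sub_sum_range_le hρ haC hs hz (m + 1)
  calc ‖s‖ ≤ ‖∑ i ∈ Finset.range (m + 1), a i * z ^ i‖
        + ‖s - ∑ i ∈ Finset.range (m + 1), a i * z ^ i‖ := norm_le_norm_add_norm_sub' _ _
    _ ≤ m * ε + C * (‖z‖ / ρ) ^ (m + 1) * 2 := by gcongr

end PowerSeries

section Coefficients

variable {a : ℕ → ℂ} {f : ℂ → ℂ} {m : ℕ}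

lemma norm_lt_of_norm_coeff_le {C t ε : ℝ}
    (hf : ∀ z ∈ ball (0 : ℂ) 1, HasSum (fun k ↦ a k * z ^ k) (f z)) (ha₀ : a 0 = 0)
    (hfC : ∀ z ∈ closedBall (0 : ℂ) (3 / 4), ‖f z‖ ≤ C) (ht : t ≤ 1 / 2)
    (haε : ∀ i ∈ Finset.Icc 1 m, ‖a i‖ ≤ ε) (hε : m * ε < C * t ^ (m + 1) * 2)
    {z : ℂ} (hz : z ∈ ball (0 : ℂ) (3 / 4 * t)) : ‖f z‖ < C * t ^ (m + 1) * 4 := by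
  rw [mem_ball_zero_iff] at hz
  have haC : ∀ k, ‖a k‖ * (3 / 4 : ℝ) ^ k ≤ C :=
    norm_coeff_mul_pow_le (by norm_num) (by norm_num) hf
      fun z hz ↦ hfC z (sphere_subset_closedBall hz)
  have hC : 0 ≤ C := (norm_nonneg _).trans (hfC 0 (by norm_num))
  have h_ratio : ‖z‖ / (3 / 4) ≤ t := by
    rw [div_le_iff₀ (by norm_num)]
    linarith
  have h_norm := norm_le_of_norm_coeff_le ha₀ haε (by norm_num) haC
    (hf z (mem_ball_zero_iff.2 (by linarith))) (by linarith) (by linarith)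
  calc ‖f z‖ ≤ m * ε + C * (‖z‖ / (3 / 4)) ^ (m + 1) * 2 := h_norm
    _ ≤ m * ε + C * t ^ (m + 1) * 2 := by gcongr
    _ < C * t ^ (m + 1) * 4 := by linarith

lemma IsPValentOn.log_norm_sub_le_of_forall_ne {C t δ : ℝ} (hf_val : IsPValentOn f (ball 0 1) m)
    (hf : AnalyticOnNhd ℂ f (ball 0 1)) (hf₀ : f 0 = 0) (hC : 0 ≤ C)
    (hfC : ∀ z ∈ closedBall (0 : ℂ) (3 / 4), ‖f z‖ ≤ C) (ht : 0 < t) (ht₁ : t ≤ 1) (hδ : 0 < δ)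
    (hδ₁ : δ ≤ 1) (hδt : δ * t⁻¹ ^ m ≤ 1) (hfδ : ∀ z ∈ ball (0 : ℂ) (3 / 4 * t), f z ≠ δ)
    {w : ℂ} (hw : w ∈ closedBall (0 : ℂ) (1 / 2)) (hfw : f w ≠ δ) :
    log ‖f w - δ‖ ≤ 4 / 5 * log (C + 1) + 1 / 5 * log (δ * t⁻¹ ^ m) := by
  rw [mem_closedBall_zero_iff] at hw
  have hδ_norm : ‖(δ : ℂ)‖ = δ := Complex.norm_of_nonneg hδ.le
  have h_an : AnalyticOnNhd ℂ (fun z ↦ f z - δ) (closedBall 0 (3 / 4)) :=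
    (hf.mono (closedBall_subset_ball (by norm_num))).sub analyticOnNhd_const
  have h_sphere : ∀ z ∈ sphere (0 : ℂ) (3 / 4), ‖f z - δ‖ ≤ C + 1 := fun z hz ↦
    (norm_sub_le _ _).trans (by linarith [hfC z (sphere_subset_closedBall hz)])
  have h_upper := log_norm_le_of_solCount_le (by positivity) (by linarith) h_an
    ((solCount_mono _ (closedBall_subset_ball (by norm_num))).trans (hf_val δ))
    (fun z hz ↦ sub_ne_zero.2 (hfδ z hz)) (by linarith) h_sphere
    (mem_ball_zero_iff.2 (by linarith)) (sub_ne_zero.2 hfw)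
  have h_center : log ‖f 0 - δ‖ + m * log (3 / 4 / (3 / 4 * t)) = log (δ * t⁻¹ ^ m) := by
    have h_inv : 3 / 4 / (3 / 4 * t) = t⁻¹ := by field_simp
    rw [hf₀, zero_sub, norm_neg, hδ_norm, h_inv, log_mul hδ.ne' (by positivity), log_pow]
  have h_ratio : 1 / 5 ≤ (3 / 4 - ‖w - 0‖) / (3 / 4 + ‖w - 0‖) := by
    rw [sub_zero, div_le_div_iff₀ (by norm_num) (by positivity)]
    linarith
  have h_gap : 0 ≤ log (C + 1) - log (δ * t⁻¹ ^ m) :=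
    sub_nonneg.2 ((log_nonpos (by positivity) hδt).trans (log_nonneg (by linarith)))
  rw [h_center] at h_upper
  linarith [mul_le_mul_of_nonneg_right h_ratio h_gap]

-- With small low coefficients, `f` omits `δ = 4 C t ^ (m + 1)` near `0`, so `f - δ` is small at
-- `0` and has its few zeros far away; it is then small at `w` too, although `‖f w‖ = 1`.
lemma IsPValentOn.one_le_of_norm_coeff_le {C t ε : ℝ} (hf_val : IsPValentOn f (ball 0 1) m)
    (hf : ∀ z ∈ ball (0 : ℂ) 1, HasSum (fun k ↦ a k * z ^ k) (f z)) (ha₀ : a 0 = 0)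
    (hC : 1 ≤ C) (hfC : ∀ z ∈ closedBall (0 : ℂ) (3 / 4), ‖f z‖ ≤ C) (ht : 0 < t)
    (hCt : 8 * C * t ≤ 1) (haε : ∀ i ∈ Finset.Icc 1 m, ‖a i‖ ≤ ε)
    (hε : m * ε < C * t ^ (m + 1) * 2) {w : ℂ} (hw : w ∈ closedBall (0 : ℂ) (1 / 2))
    (hfw : ‖f w‖ = 1) : 1 ≤ 128 * C * (C + 1) ^ 4 * t := by
  have ht_le : t ≤ 1 / 8 := by nlinarith
  set δ := C * t ^ (m + 1) * 4 with hδ_def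
  have hδ : 0 < δ := by positivity
  have hδ_norm : ‖(δ : ℂ)‖ = δ := Complex.norm_of_nonneg hδ.le
  have hδ_le : δ ≤ 1 / 2 := by
    have h_pow : t ^ (m + 1) ≤ t := pow_le_of_le_one ht.le (by linarith) m.succ_ne_zero
    nlinarith
  have hδt : δ * t⁻¹ ^ m = 4 * C * t := by
    rw [hδ_def, pow_succ, inv_pow]
    field_simp
  have h_omit : ∀ z ∈ ball (0 : ℂ) (3 / 4 * t), f z ≠ δ := fun z hz h_eq ↦
    (norm_lt_of_norm_coeff_le hf ha₀ hfC (by linarith) haε hε hz).ne (by rw [h_eq, hδ_norm])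
  have h_lower : 1 / 2 ≤ ‖f w - δ‖ := by linarith [norm_sub_norm_le (f w) δ]
  have h_upper := hf_val.log_norm_sub_le_of_forall_ne (analyticOnNhd_of_hasSum one_pos hf)
    (by rw [eq_coeff_zero_of_hasSum one_pos hf, ha₀]) (by linarith) hfC ht (by linarith) hδ
    (by linarith) (by linarith) h_omit hw (sub_ne_zero.1 (norm_pos_iff.1 (by linarith)))
  have h_log_lower := log_le_log (by norm_num) h_lower
  have h_log : log (128 * C * (C + 1) ^ 4 * t) =
      -(5 * log (1 / 2)) + 4 * log (C + 1) + log (4 * C * t) := by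
    rw [show 128 * C * (C + 1) ^ 4 * t = 2 ^ 5 * (C + 1) ^ 4 * (4 * C * t) by ring,
      log_mul (by positivity) (by positivity), log_mul (by positivity) (by positivity), log_pow,
      log_pow, one_div, log_inv]
    push_cast
    ring
  rw [← log_nonneg_iff (by positivity), h_log]
  rw [hδt] at h_upper
  linarith

lemma IsPValentOn.norm_mul_one_sub_norm_pow_le (hm₀ : 0 < m) (hf_val : IsPValentOn f (ball 0 1) m)
    (hf : AnalyticOnNhd ℂ f (ball 0 1))
    (hf_half : ∀ z ∈ closedBall (0 : ℂ) (1 / 2), ‖f z‖ ≤ 1) {z : ℂ} (hz : z ∈ ball (0 : ℂ) 1) :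
    ‖f z‖ * (1 - ‖z‖) ^ (2 * m) ≤ 2 ^ (1 + 8 * m) :=
  (hf_val.fiberCardLEOn hf).norm_mul_one_sub_norm_pow_le hm₀ hf hf_half hz

lemma exists_le_norm_coeff (hm₀ : 0 < m) : ∃ ε : ℝ, 0 < ε ∧ ∀ (a : ℕ → ℂ) (f : ℂ → ℂ),
    (∀ z ∈ ball (0 : ℂ) 1, HasSum (fun k ↦ a k * z ^ k) (f z)) → a 0 = 0 →
    IsPValentOn f (ball 0 1) m → (∀ z ∈ closedBall (0 : ℂ) (1 / 2), ‖f z‖ ≤ 1) →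
    (∃ z ∈ closedBall (0 : ℂ) (1 / 2), ‖f z‖ = 1) → ∃ i ∈ Finset.Icc 1 m, ε ≤ ‖a i‖ := by
  set C : ℝ := 2 ^ (1 + 8 * m) * 4 ^ (2 * m)
  have hC : 1 ≤ C := one_le_mul_of_one_le_of_one_le (one_le_pow₀ one_le_two)
    (one_le_pow₀ (by norm_num))
  set t : ℝ := ((C + 1) ^ 5 * 256)⁻¹
  have ht : 0 < t := by positivity
  have ht_mul : (C + 1) ^ 5 * 256 * t = 1 := mul_inv_cancel₀ (by positivity)
  have hm_pos : (0 : ℝ) < m := Nat.cast_pos.2 hm₀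
  refine ⟨C * t ^ (m + 1) / m, by positivity, fun a f hf ha₀ hf_val hf_half ⟨w, hw, hfw⟩ ↦ ?_⟩
  have hfC : ∀ z ∈ closedBall (0 : ℂ) (3 / 4), ‖f z‖ ≤ C := by
    intro z hz
    rw [mem_closedBall_zero_iff] at hz
    have h_growth := hf_val.norm_mul_one_sub_norm_pow_le hm₀ (analyticOnNhd_of_hasSum one_pos hf)
      hf_half (mem_ball_zero_iff.2 (hz.trans_lt (by norm_num)))
    have h_quarter : ‖f z‖ * (4⁻¹ : ℝ) ^ (2 * m) ≤ 2 ^ (1 + 8 * m) :=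
      (by gcongr; linarith : _ ≤ ‖f z‖ * (1 - ‖z‖) ^ (2 * m)).trans h_growth
    rwa [inv_pow, ← div_eq_mul_inv, div_le_iff₀ (by positivity)] at h_quarter
  by_contra! h_small
  have hCt : 8 * C * t ≤ (C + 1) ^ 5 * 256 * t := by
    gcongr ?_ * t
    linarith [le_self_pow₀ (by linarith : 1 ≤ C + 1) (by norm_num : 5 ≠ 0)]
  have hε : m * (C * t ^ (m + 1) / m) < C * t ^ (m + 1) * 2 := by
    rw [mul_div_cancel₀ _ hm_pos.ne']
    exact lt_mul_of_one_lt_right (by positivity) one_lt_two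
  have h_one := hf_val.one_le_of_norm_coeff_le hf ha₀ hC hfC ht (hCt.trans_eq ht_mul)
    (fun i hi ↦ (h_small i hi).le) hε hw hfw
  have h_lt : 128 * C * (C + 1) ^ 4 * t < (C + 1) ^ 5 * 256 * t := by
    gcongr ?_ * t
    nlinarith [show 0 < (C + 1) ^ 4 by positivity]
  linarith

lemma half_le_one_sub_pow {k : ℕ} (hk : 0 < k) : 1 / 2 ≤ (1 - (2 * k : ℝ)⁻¹) ^ k := by
  have hk_one : (1 : ℝ) ≤ k := Nat.one_le_cast.2 hk
  have h_inv : (2 * k : ℝ)⁻¹ ≤ 1 := inv_le_one_of_one_le₀ (by linarith)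
  calc (1 / 2 : ℝ) = 1 + k * -(2 * k : ℝ)⁻¹ := by field_simp; norm_num
    _ ≤ (1 + -(2 * k : ℝ)⁻¹) ^ k := one_add_mul_le_pow (by linarith) k
    _ = (1 - (2 * k : ℝ)⁻¹) ^ k := by rw [← sub_eq_add_neg]

lemma IsPValentOn.norm_coeff_le (hm₀ : 0 < m) (hf_val : IsPValentOn f (ball 0 1) m)
    (hf : ∀ z ∈ ball (0 : ℂ) 1, HasSum (fun k ↦ a k * z ^ k) (f z))
    (hf_half : ∀ z ∈ closedBall (0 : ℂ) (1 / 2), ‖f z‖ ≤ 1) {k : ℕ} (hk : 0 < k) :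
    ‖a k‖ ≤ 2 ^ (1 + 8 * m) * (2 * k) ^ (2 * m) * 2 := by
  have hk_one : (1 : ℝ) ≤ k := Nat.one_le_cast.2 hk
  have h_inv_pos : 0 < (2 * k : ℝ)⁻¹ := by positivity
  have h_inv_lt : (2 * k : ℝ)⁻¹ < 1 := inv_lt_one_of_one_lt₀ (by linarith)
  have h_sphere : ∀ z ∈ sphere (0 : ℂ) (1 - (2 * k : ℝ)⁻¹),
      ‖f z‖ ≤ 2 ^ (1 + 8 * m) * (2 * k) ^ (2 * m) := by
    intro z hz
    rw [mem_sphere_zero_iff_norm] at hz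
    have h_growth := hf_val.norm_mul_one_sub_norm_pow_le hm₀ (analyticOnNhd_of_hasSum one_pos hf)
      hf_half (mem_ball_zero_iff.2 (by linarith))
    rwa [hz, sub_sub_cancel, inv_pow, ← div_eq_mul_inv, div_le_iff₀ (by positivity)] at h_growth
  have h_cauchy := norm_coeff_mul_pow_le (by linarith) (by linarith) hf h_sphere k
  linarith [mul_le_mul_of_nonneg_left (half_le_one_sub_pow hk) (norm_nonneg (a k))]

lemma IsPValentOn.exists_isMaxOn_norm_sub (hf_val : IsPValentOn f (ball 0 1) m)
    (hf : ContinuousOn f (ball 0 1)) (c : ℂ) :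
    ∃ w ∈ closedBall (0 : ℂ) (1 / 2), 0 < ‖f w - c‖ ∧
      IsMaxOn (fun z ↦ ‖f z - c‖) (closedBall 0 (1 / 2)) w := by
  have h_cont : ContinuousOn (fun z ↦ ‖f z - c‖) (closedBall 0 (1 / 2)) :=
    ((hf.mono (closedBall_subset_ball (by norm_num))).sub continuousOn_const).norm
  obtain ⟨w, hw, hw_max⟩ := (isCompact_closedBall (0 : ℂ) (1 / 2)).exists_isMaxOn
    (nonempty_closedBall.2 (by norm_num)) h_cont
  refine ⟨w, hw, norm_pos_iff.2 fun h_zero ↦ ?_, hw_max⟩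
  refine hf_val.not_eventually_eq (mem_ball_self one_pos) c ?_
  filter_upwards [closedBall_mem_nhds (0 : ℂ) (by norm_num : (0 : ℝ) < 1 / 2)] with z hz
  have h_le : ‖f z - c‖ ≤ ‖f w - c‖ := hw_max hz
  rwa [h_zero, norm_zero, norm_le_zero_iff, sub_eq_zero] at h_le

lemma hasSum_update_coeff_zero {z : ℂ} (hf : HasSum (fun k ↦ a k * z ^ k) (f z)) (c : ℂ) :
    HasSum (fun k ↦ c * Function.update a 0 0 k * z ^ k) (c * (f z - a 0)) := by
  have h_terms : (fun k ↦ c * Function.update a 0 0 k * z ^ k) =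
      fun k ↦ c * Function.update (fun k ↦ a k * z ^ k) 0 0 k := by
    funext k
    rcases eq_or_ne k 0 with rfl | hk
    · simp
    · simp [hk, mul_assoc]
  have h_value : c * (f z - a 0) = c * (0 - a 0 * z ^ 0 + f z) := by ring
  rw [h_terms, h_value]
  exact (hf.update 0 0).mul_left c

theorem exists_forall_norm_coeff_le (hm₀ : 0 < m) :
    ∃ K : ℝ, ∀ (a : ℕ → ℂ) (f : ℂ → ℂ),
      (∀ z ∈ ball (0 : ℂ) 1, HasSum (fun k ↦ a k * z ^ k) (f z)) →
      IsPValentOn f (ball 0 1) m →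
      ∃ i ∈ Finset.Icc 1 m, ∀ k, 0 < k → ‖a k‖ ≤ K * k ^ (2 * m) * ‖a i‖ := by
  obtain ⟨ε, hε, h_low⟩ := exists_le_norm_coeff hm₀
  refine ⟨2 ^ (1 + 8 * m) * 2 ^ (2 * m) * 2 / ε, fun a f hf hf_val ↦ ?_⟩
  obtain ⟨w, hw, hM, hw_max⟩ := hf_val.exists_isMaxOn_norm_sub
    (analyticOnNhd_of_hasSum one_pos hf).continuousOn (a 0)
  set M := ‖f w - a 0‖ with hM_def
  have hM_norm : ‖(M : ℂ)⁻¹‖ = M⁻¹ := by rw [norm_inv, Complex.norm_of_nonneg hM.le]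
  -- The normalised function `(f - a 0) / M` has maximum modulus `1` on the half disk.
  have hg z (hz : z ∈ ball (0 : ℂ) 1) := hasSum_update_coeff_zero (hf z hz) (M : ℂ)⁻¹
  have hg_val := hf_val.const_mul_sub (inv_ne_zero (Complex.ofReal_ne_zero.2 hM.ne')) (a 0)
  have hg_half : ∀ z ∈ closedBall (0 : ℂ) (1 / 2), ‖(M : ℂ)⁻¹ * (f z - a 0)‖ ≤ 1 := by
    intro z hz
    rw [norm_mul, hM_norm, inv_mul_le_one₀ hM]
    exact hw_max hz
  have hg_one : ‖(M : ℂ)⁻¹ * (f w - a 0)‖ = 1 := by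
    rw [norm_mul, hM_norm, ← hM_def, inv_mul_cancel₀ hM.ne']
  have hg_coeff : ∀ k, 0 < k → ‖(M : ℂ)⁻¹ * Function.update a 0 0 k‖ = M⁻¹ * ‖a k‖ := by
    intro k hk
    rw [norm_mul, hM_norm, Function.update_of_ne hk.ne']
  obtain ⟨i, hi, hεi⟩ := h_low _ _ hg (by simp) hg_val hg_half ⟨w, hw, hg_one⟩
  refine ⟨i, hi, fun k hk ↦ ?_⟩
  have h_coeff := hg_val.norm_coeff_le hm₀ hg hg_half hk
  rw [hg_coeff k hk, inv_mul_le_iff₀ hM] at h_coeff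
  rw [hg_coeff i (Finset.mem_Icc.1 hi).1, le_inv_mul_iff₀ hM, ← le_div_iff₀ hε] at hεi
  calc ‖a k‖ ≤ M * (2 ^ (1 + 8 * m) * (2 * k) ^ (2 * m) * 2) := h_coeff
    _ ≤ ‖a i‖ / ε * (2 ^ (1 + 8 * m) * (2 * k) ^ (2 * m) * 2) := by gcongr
    _ = 2 ^ (1 + 8 * m) * 2 ^ (2 * m) * 2 / ε * k ^ (2 * m) * ‖a i‖ := by rw [mul_pow]; ring

end Coefficients

section Dilation

variable {f : ℂ → ℂ} {m : ℕ} {R : ℝ}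

lemma mapsTo_ofReal_mul_ball (hR : 0 < R) :
    MapsTo (fun z : ℂ ↦ R * z) (ball 0 1) (ball 0 R) := by
  intro z hz
  rw [mem_ball_zero_iff] at hz ⊢
  rw [norm_ofReal_mul hR.le]
  exact mul_lt_of_lt_one_right hR hz

lemma IsPValentOn.comp_ofReal_mul (hR : 0 < R) (hf_val : IsPValentOn f (ball 0 R) m) :
    IsPValentOn (fun z ↦ f (R * z)) (ball 0 1) m := by
  have hR_ne : (R : ℂ) ≠ 0 := Complex.ofReal_ne_zero.2 hR.ne'
  have h_image : (fun z : ℂ ↦ R * z) '' ball 0 1 ⊆ ball 0 R :=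
    (mapsTo_ofReal_mul_ball hR).image_subset
  refine IsPValentOn.comp (φ := fun z ↦ R * z)
    (fun c ↦ (solCount_mono _ h_image).trans (hf_val c))
    (analyticOnNhd_const.mul analyticOnNhd_id) (fun z _ ↦ ?_) (mul_right_injective₀ hR_ne).injOn
  rw [deriv_const_mul_field, deriv_id'', mul_one]
  exact hR_ne

theorem exists_forall_norm_coeff_mul_pow_le (hm₀ : 0 < m) :
    ∃ K : ℝ, ∀ (R : ℝ) (a : ℕ → ℂ) (f : ℂ → ℂ), 0 < R →
      (∀ z ∈ ball (0 : ℂ) R, HasSum (fun k ↦ a k * z ^ k) (f z)) →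
      IsPValentOn f (ball 0 R) m →
      ∃ i ∈ Finset.Icc 1 m, ∀ k, 0 < k → ‖a k‖ * R ^ k ≤ K * k ^ (2 * m) * (‖a i‖ * R ^ i) := by
  obtain ⟨K, h_unit⟩ := exists_forall_norm_coeff_le hm₀
  refine ⟨K, fun R a f hR hf hf_val ↦ ?_⟩
  have h_norm : ∀ k, ‖a k * (R : ℂ) ^ k‖ = ‖a k‖ * R ^ k := fun k ↦ by
    rw [norm_mul, norm_pow, Complex.norm_of_nonneg hR.le]
  have hf_dilate : ∀ z ∈ ball (0 : ℂ) 1,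
      HasSum (fun k ↦ a k * (R : ℂ) ^ k * z ^ k) (f (R * z)) := fun z hz ↦ by
    simpa only [mul_pow, ← mul_assoc] using hf _ (mapsTo_ofReal_mul_ball hR hz)
  simpa only [h_norm] using h_unit _ _ hf_dilate (hf_val.comp_ofReal_mul hR)

end Dilation

lemma mul_pow_le_max_one_mul_pow (K : ℝ) {x : ℝ} (hx : 0 ≤ x) {n : ℕ} (hn : n ≠ 0) :
    K * x ^ n ≤ (max K 1 * x) ^ n := by
  rw [mul_pow]
  gcongr
  exact (le_max_left K 1).trans (le_self_pow₀ (le_max_right K 1) hn)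

end

/-- Biernacki's theorem: for every positive integer `m` there is a constant `A_m > 0`
such that if `f(z) = ∑ a_k z^k` is analytic and `m`-valent in `D_R`, then
`|a_k| R^k ≤ (A_m k / m)^{2m} · max_{1 ≤ i ≤ m} |a_i| R^i` for all `k ≥ m + 1`. -/
theorem statement3 (m : ℕ) (hm : 0 < m) :
    ∃ A : ℝ, 0 < A ∧
      ∀ (R : ℝ) (a : ℕ → ℂ) (f : ℂ → ℂ), 0 < R →
        (∀ z ∈ Metric.ball (0 : ℂ) R, HasSum (fun k => a k * z ^ k) (f z)) →
        IsPValentOn f (Metric.ball (0 : ℂ) R) m →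
        ∀ k : ℕ, m + 1 ≤ k →
          ‖a k‖ * R ^ k ≤
            (A * k / m) ^ (2 * m) *
              (Finset.Icc 1 m).sup' (Finset.nonempty_Icc.mpr hm)
                (fun i => ‖a i‖ * R ^ i) := by
  obtain ⟨K, hK⟩ := exists_forall_norm_coeff_mul_pow_le hm
  refine ⟨m * max K 1, by positivity, fun R a f hR hf hf_val k hk ↦ ?_⟩
  obtain ⟨i, hi, h_coeff⟩ := hK R a f hR hf hf_val
  have h_const : (m * max K 1 * k / m : ℝ) = max K 1 * k := by field_simp
  rw [h_const]
  calc ‖a k‖ * R ^ k ≤ K * k ^ (2 * m) * (‖a i‖ * R ^ i) := h_coeff k (by omega)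
    _ ≤ (max K 1 * k) ^ (2 * m) * (‖a i‖ * R ^ i) := by
        gcongr
        exact mul_pow_le_max_one_mul_pow K k.cast_nonneg (by omega)
    _ ≤ _ := by
        gcongr
        exact Finset.le_sup' (fun i ↦ ‖a i‖ * R ^ i) hi
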